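/- arXiv:1703.07979 — 6 statements merged into one kernel-verified Lean document; each statement's English description precedes it below -/
import Mathlib

section
/- For every integer m ≥ 1 and every b > 0, the limit as ε → 0⁺ of [∫_ε^∞ e^{-bx} x^{-m} dx − (Σ_{k=0}^{m-2} (-b)^k/(k! (m-k-1) ε^{m-k-1}) − ((-b)^{m-1}/(m-1)!) ln ε)] exists and equals ((-1)^m b^{m-1}/(m-1)!) (ln b − H_{m-1} + γ), where H_{m-1} = Σ_{j=1}^{m-1} 1/j is the (m−1)-st harmonic number (H_0 = 0) and γ is the Euler–Mascheroni constant. -/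
/-!
For a function `f` with Taylor coefficients `c k` at `0`, integrate `f x / x ^ (n + 2)` by parts.
The boundary term `f ε / ((n + 1) ε ^ (n + 1))` and the divergent parts for `f` and `f'` combine to
the Taylor remainder of `f` divided by `(n + 1) ε ^ (n + 1)`, so that the finite parts satisfy
`FP ∫ f / x ^ (n + 2) = (c (n + 1) + FP ∫ f' / x ^ (n + 1)) / (n + 1)`, starting from
`FP ∫ f / x = -∫ log x * f' x`. For `f x = exp (-b * x)` the derivative is `-b * f x`, so the
recursion closes up and produces the harmonic numbers, while the initial integral is a rescaling
of `∫ log x * exp (-x) = Γ' 1 = -γ`.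
-/

open Filter MeasureTheory Set

open Asymptotics Topology

section IntegrationByParts

variable {f f' : ℝ → ℝ} {a : ℝ}

theorem integrableOn_Ioi_div_pow (hf : IntegrableOn f (Ioi a)) (ha : 0 < a) (n : ℕ) :
    IntegrableOn (fun x => f x / x ^ n) (Ioi a) := by
  have hmeas : AEStronglyMeasurable (fun x => f x / x ^ n) (volume.restrict (Ioi a)) :=
    (hf.aemeasurable.div (by fun_prop)).aestronglyMeasurable
  refine (hf.norm.div_const (a ^ n)).mono' hmeas ?_
  filter_upwards [ae_restrict_mem measurableSet_Ioi] with x hx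
  have hax : a < x := hx
  rw [norm_div, norm_pow, Real.norm_of_nonneg (ha.trans hax).le]
  gcongr

theorem mul_integral_Ioi_div_pow_add_two (n : ℕ) (ha : 0 < a)
    (hderiv : ∀ x ∈ Ici a, HasDerivAt f (f' x) x)
    (hf : IntegrableOn (fun x => f x / x ^ (n + 2)) (Ioi a))
    (hf' : IntegrableOn (fun x => f' x / x ^ (n + 1)) (Ioi a))
    (hlim : Tendsto (fun x => f x / x ^ (n + 1)) atTop (𝓝 0)) :
    (n + 1) * ∫ x in Ioi a, f x / x ^ (n + 2) =
      f a / a ^ (n + 1) + ∫ x in Ioi a, f' x / x ^ (n + 1) := by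
  have hquot : ∀ x ∈ Ici a, HasDerivAt (fun x => f x / x ^ (n + 1))
      (f' x / x ^ (n + 1) - (n + 1) * (f x / x ^ (n + 2))) x := by
    intro x hx
    have hx0 : x ≠ 0 := (ha.trans_le hx).ne'
    refine ((hderiv x hx).div (hasDerivAt_pow (n + 1) x) (pow_ne_zero _ hx0)).congr_deriv ?_
    rw [Nat.add_sub_cancel]
    push_cast
    field_simp
    ring
  have hFTC := integral_Ioi_of_hasDerivAt_of_tendsto' hquot (hf'.sub (hf.const_mul _)) hlim
  rw [integral_sub hf' (hf.const_mul _), integral_const_mul] at hFTC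
  linarith

theorem integral_Ioi_div_self (ha : 0 < a) (hderiv : ∀ x ∈ Ici a, HasDerivAt f (f' x) x)
    (hf : IntegrableOn (fun x => f x / x) (Ioi a))
    (hf' : IntegrableOn (fun x => Real.log x * f' x) (Ioi a))
    (hlim : Tendsto (fun x => Real.log x * f x) atTop (𝓝 0)) :
    ∫ x in Ioi a, f x / x = -(Real.log a * f a) - ∫ x in Ioi a, Real.log x * f' x := by
  have hmul : ∀ x ∈ Ici a, HasDerivAt (fun x => Real.log x * f x)
      (f x / x + Real.log x * f' x) x := by
    intro x hx
    refine ((Real.hasDerivAt_log (ha.trans_le hx).ne').mul (hderiv x hx)).congr_deriv ?_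
    ring
  have hFTC := integral_Ioi_of_hasDerivAt_of_tendsto' hmul (hf.add hf') hlim
  rw [integral_add hf hf'] at hFTC
  linarith

theorem tendsto_integral_Ioi_nhdsGT (hf : IntegrableOn f (Ioi a)) :
    Tendsto (fun ε => ∫ x in Ioi ε, f x) (𝓝[>] a) (𝓝 (∫ x in Ioi a, f x)) := by
  have hcover : AECover (volume.restrict (Ioi a)) (𝓝[>] a) (fun ε => Ioi ε) :=
    aecover_Ioi_of_Ioi (tendsto_id.mono_left nhdsWithin_le_nhds)
  refine (hcover.integral_tendsto_of_countably_generated hf).congr' ?_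
  filter_upwards [self_mem_nhdsWithin] with ε hε
  rw [Measure.restrict_restrict measurableSet_Ioi,
    inter_eq_left.2 (Ioi_subset_Ioi (le_of_lt hε))]

end IntegrationByParts

/-- The divergent part of `∫ x in Ioi ε, f x / x ^ (n + 1)` as `ε → 0⁺`, where `c k` are the Taylor
coefficients of `f` at `0`. Indexing by `n = m - 1`, with `m` the exponent, keeps truncated
subtraction out of the sum: `k < n` in `n - k`. -/
noncomputable def divergentPart (c : ℕ → ℝ) (n : ℕ) (ε : ℝ) : ℝ :=
  ∑ k ∈ Finset.range n, c k / ((n - k : ℕ) * ε ^ (n - k)) - c n * Real.log ε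

/-- `L` is the finite part of the divergent integral `∫ x in Ioi 0, f x / x ^ (n + 1)`, where `c k`
are the Taylor coefficients of `f` at `0`. Integrability away from `0` is included because the
Bochner integral of a non-integrable function is `0`. -/
structure HasFinitePart (f : ℝ → ℝ) (c : ℕ → ℝ) (n : ℕ) (L : ℝ) : Prop where
  integrableOn : ∀ ε > 0, IntegrableOn (fun x => f x / x ^ (n + 1)) (Ioi ε)
  tendsto : Tendsto (fun ε => (∫ x in Ioi ε, f x / x ^ (n + 1)) - divergentPart c n ε)
    (𝓝[>] 0) (𝓝 L)

theorem divergentPart_const_mul (a : ℝ) (c : ℕ → ℝ) (n : ℕ) (ε : ℝ) :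
    divergentPart (fun k => a * c k) n ε = a * divergentPart c n ε := by
  simp only [divergentPart, mul_sub, Finset.mul_sum, mul_div_assoc, mul_assoc]

-- `fun k => (k + 1) * c (k + 1)` are the Taylor coefficients of the derivative.
theorem mul_divergentPart_succ (c : ℕ → ℝ) (n : ℕ) {ε : ℝ} (hε : ε ≠ 0) :
    (n + 1) * divergentPart c (n + 1) ε =
      (∑ k ∈ Finset.range (n + 1), c k * ε ^ k) / ε ^ (n + 1) +
        divergentPart (fun k => (k + 1) * c (k + 1)) n ε := by
  have hsplit : ∀ k ∈ Finset.range (n + 1),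
      (n + 1) * (c k / ((n + 1 - k : ℕ) * ε ^ (n + 1 - k))) =
        c k * ε ^ k / ε ^ (n + 1) + k * c k / ((n + 1 - k : ℕ) * ε ^ (n + 1 - k)) := by
    intro k hk
    obtain ⟨d, rfl⟩ := Nat.exists_eq_add_of_le (Finset.mem_range_succ_iff.1 hk)
    rw [show k + d + 1 - k = d + 1 by omega]
    push_cast
    field_simp
    ring
  have hshift : ∑ k ∈ Finset.range (n + 1), k * c k / ((n + 1 - k : ℕ) * ε ^ (n + 1 - k)) =
      ∑ k ∈ Finset.range n, (k + 1) * c (k + 1) / ((n - k : ℕ) * ε ^ (n - k)) := by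
    simp [Finset.sum_range_succ']
  simp only [divergentPart, mul_sub, Finset.mul_sum]
  rw [Finset.sum_congr rfl hsplit, Finset.sum_add_distrib, hshift, ← Finset.sum_div]
  ring

namespace HasFinitePart

variable {f f' : ℝ → ℝ} {c : ℕ → ℝ} {n : ℕ} {L : ℝ}

theorem const_mul (h : HasFinitePart f c n L) (a : ℝ) :
    HasFinitePart (fun x => a * f x) (fun k => a * c k) n (a * L) where
  integrableOn ε hε := by
    simpa only [mul_div_assoc, IntegrableOn] using (h.integrableOn ε hε).const_mul a
  tendsto := by
    simpa only [divergentPart_const_mul, mul_div_assoc, integral_const_mul, ← mul_sub]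
      using h.tendsto.const_mul a

theorem zero_of_hasDerivAt (hderiv : ∀ x > 0, HasDerivAt f (f' x) x)
    (htaylor : (fun x => f x - c 0) =O[𝓝[>] 0] fun x => x)
    (hf : ∀ ε > 0, IntegrableOn (fun x => f x / x) (Ioi ε))
    (hf' : IntegrableOn (fun x => Real.log x * f' x) (Ioi 0))
    (hlim : Tendsto (fun x => Real.log x * f x) atTop (𝓝 0)) :
    HasFinitePart f c 0 (-∫ x in Ioi 0, Real.log x * f' x) where
  integrableOn := by simpa only [zero_add, pow_one] using hf
  tendsto := by
    have hlog : Tendsto (fun ε => Real.log ε * (f ε - c 0)) (𝓝[>] 0) (𝓝 0) := by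
      refine ((isBigO_refl Real.log _).mul htaylor).trans_tendsto ?_
      simpa using tendsto_log_mul_rpow_nhdsGT_zero one_pos
    have hsum := hlog.neg.sub (tendsto_integral_Ioi_nhdsGT hf')
    rw [neg_zero, zero_sub] at hsum
    refine hsum.congr' ?_
    filter_upwards [self_mem_nhdsWithin] with ε (hε : 0 < ε)
    have hparts := integral_Ioi_div_self hε (fun x hx => hderiv x (hε.trans_le hx)) (hf ε hε)
      (hf'.mono_set (Ioi_subset_Ioi hε.le)) hlim
    simp only [zero_add, pow_one, hparts, divergentPart, Finset.range_zero, Finset.sum_empty]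
    ring

theorem succ_of_hasDerivAt (h : HasFinitePart f' (fun k => (k + 1) * c (k + 1)) n L)
    (hderiv : ∀ x > 0, HasDerivAt f (f' x) x)
    (htaylor : (fun x => f x - ∑ k ∈ Finset.range (n + 2), c k * x ^ k) =o[𝓝[>] 0]
      fun x => x ^ (n + 1))
    (hf : ∀ ε > 0, IntegrableOn (fun x => f x / x ^ (n + 2)) (Ioi ε))
    (hlim : Tendsto (fun x => f x / x ^ (n + 1)) atTop (𝓝 0)) :
    HasFinitePart f c (n + 1) ((c (n + 1) + L) / (n + 1)) where
  integrableOn := hf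
  tendsto := by
    have hsum := ((htaylor.tendsto_div_nhds_zero.add_const (c (n + 1))).add h.tendsto).div_const
      ((n : ℝ) + 1)
    rw [zero_add] at hsum
    refine hsum.congr' ?_
    filter_upwards [self_mem_nhdsWithin] with ε (hε : 0 < ε)
    have hparts := mul_integral_Ioi_div_pow_add_two n hε (fun x hx => hderiv x (hε.trans_le hx))
      (hf ε hε) (h.integrableOn ε hε) hlim
    rw [div_eq_iff (by positivity), sub_mul, mul_comm _ ((n : ℝ) + 1), hparts,
      mul_comm _ ((n : ℝ) + 1), mul_divergentPart_succ c n hε.ne', Finset.sum_range_succ]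
    field_simp
    ring

end HasFinitePart

theorem integral_log_mul_exp_neg :
    ∫ x in Ioi (0 : ℝ), Real.log x * Real.exp (-x) = -Real.eulerMascheroniConstant := by
  have hGammaIntegral : HasDerivAt Complex.GammaIntegral (-Real.eulerMascheroniConstant : ℂ) 1 := by
    refine Complex.hasDerivAt_Gamma_one.congr_of_eventuallyEq ?_
    filter_upwards [(isOpen_Ioi.preimage Complex.continuous_re).mem_nhds
      (show (1 : ℂ) ∈ Complex.re ⁻¹' Ioi 0 by simp)] with s hs
    exact (Complex.Gamma_eq_integral hs).symm
  have hunique := (Complex.hasDerivAt_GammaIntegral (s := 1) (by simp)).unique hGammaIntegral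
  simp only [sub_self, Complex.cpow_zero, one_mul] at hunique
  apply Complex.ofReal_injective
  rw [← integral_complex_ofReal]
  push_cast at hunique ⊢
  exact hunique

-- Non-integrability would force the integral, which equals `-γ ≠ 0`, to be `0`.
theorem integrableOn_log_mul_exp_neg :
    IntegrableOn (fun x => Real.log x * Real.exp (-x)) (Ioi 0) := by
  refine Integrable.of_integral_ne_zero ?_
  rw [integral_log_mul_exp_neg]
  linarith [Real.one_half_lt_eulerMascheroniConstant]

section ExpNegMul

variable {b : ℝ}

theorem tendsto_log_mul_exp_neg_mul_atTop (hb : 0 < b) :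
    Tendsto (fun x => Real.log x * Real.exp (-b * x)) atTop (𝓝 0) := by
  refine (Real.isLittleO_log_id_atTop.isBigO.mul (isBigO_refl _ _)).trans_tendsto ?_
  simpa using tendsto_rpow_mul_exp_neg_mul_atTop_nhds_zero 1 b hb

theorem log_mul_exp_neg_mul_eqOn (hb : 0 < b) :
    EqOn (fun x => Real.log x * Real.exp (-b * x))
      (fun x => Real.log (b * x) * Real.exp (-(b * x)) - Real.log b * Real.exp (-b * x))
      (Ioi 0) := by
  intro x hx
  simp only [Real.log_mul hb.ne' (ne_of_gt hx), neg_mul]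
  ring

theorem integrableOn_log_comp_mul_mul_exp_neg (hb : 0 < b) :
    IntegrableOn (fun x => Real.log (b * x) * Real.exp (-(b * x))) (Ioi 0) :=
  (integrableOn_Ioi_comp_mul_left_iff (fun u => Real.log u * Real.exp (-u)) 0 hb).2
    (by simpa only [mul_zero] using integrableOn_log_mul_exp_neg)

theorem integrableOn_log_mul_exp_neg_mul (hb : 0 < b) :
    IntegrableOn (fun x => Real.log x * Real.exp (-b * x)) (Ioi 0) :=
  ((integrableOn_log_comp_mul_mul_exp_neg hb).sub
    ((exp_neg_integrableOn_Ioi 0 hb).const_mul _)).congr_fun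
    (log_mul_exp_neg_mul_eqOn hb).symm measurableSet_Ioi

theorem integral_log_mul_exp_neg_mul (hb : 0 < b) :
    ∫ x in Ioi 0, Real.log x * Real.exp (-b * x) =
      -(Real.eulerMascheroniConstant + Real.log b) / b := by
  rw [setIntegral_congr_fun measurableSet_Ioi (log_mul_exp_neg_mul_eqOn hb),
    integral_sub (integrableOn_log_comp_mul_mul_exp_neg hb)
      ((exp_neg_integrableOn_Ioi 0 hb).const_mul _),
    integral_comp_mul_left_Ioi (fun u => Real.log u * Real.exp (-u)) 0 hb, mul_zero,
    integral_log_mul_exp_neg, integral_const_mul, integral_exp_mul_Ioi (neg_neg_iff_pos.2 hb),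
    mul_zero, Real.exp_zero, smul_eq_mul]
  field_simp
  ring

theorem isLittleO_exp_mul_sub_taylor (a : ℝ) (n : ℕ) :
    (fun x => Real.exp (a * x) - ∑ k ∈ Finset.range (n + 1), a ^ k / k.factorial * x ^ k)
      =o[𝓝 0] fun x => x ^ n := by
  have hzero : Tendsto (fun x => a * x) (𝓝 0) (𝓝 0) :=
    (continuous_const_mul a).tendsto' 0 0 (mul_zero a)
  have hscale : (fun x => (a * x) ^ n) =O[𝓝 0] fun x => x ^ n := by
    simpa only [mul_pow] using isBigO_const_mul_self (a ^ n) (fun x => x ^ n) (𝓝 0)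
  refine (((Real.exp_sub_sum_range_succ_isLittleO_pow n).comp_tendsto hzero).trans_isBigO
    hscale).congr_left fun x => ?_
  simp only [Function.comp_apply, mul_pow, mul_div_right_comm]

theorem hasDerivAt_exp_mul (a x : ℝ) :
    HasDerivAt (fun x => Real.exp (a * x)) (a * Real.exp (a * x)) x := by
  simpa [mul_comm] using ((hasDerivAt_id x).const_mul a).exp

theorem hasFinitePart_exp_neg_mul_zero (hb : 0 < b) :
    HasFinitePart (fun x => Real.exp (-b * x)) (fun k => (-b) ^ k / k.factorial) 0
      (-(Real.eulerMascheroniConstant + Real.log b)) := by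
  have htaylor : (fun x => Real.exp (-b * x) - (-b) ^ 0 / Nat.factorial 0) =O[𝓝[>] 0]
      fun x => x := by
    simpa using ((hasDerivAt_exp_mul (-b) 0).isBigO_sub).mono nhdsWithin_le_nhds
  have hlog : (fun x => Real.log x * (-b * Real.exp (-b * x))) =
      fun x => -b * (Real.log x * Real.exp (-b * x)) := by
    ext x; ring
  convert HasFinitePart.zero_of_hasDerivAt (c := fun k => (-b) ^ k / k.factorial)
    (fun x _ => hasDerivAt_exp_mul (-b) x) htaylor
    (fun ε hε => by simpa using integrableOn_Ioi_div_pow (exp_neg_integrableOn_Ioi ε hb) hε 1)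
    (hlog ▸ (integrableOn_log_mul_exp_neg_mul hb).const_mul (-b))
    (tendsto_log_mul_exp_neg_mul_atTop hb) using 1
  rw [hlog, integral_const_mul, integral_log_mul_exp_neg_mul hb]
  field_simp

theorem hasFinitePart_exp_neg_mul (hb : 0 < b) (n : ℕ) :
    HasFinitePart (fun x => Real.exp (-b * x)) (fun k => (-b) ^ k / k.factorial) n
      ((-b) ^ n / n.factorial * (harmonic n - Real.eulerMascheroniConstant - Real.log b)) := by
  induction n with
  | zero =>
    convert hasFinitePart_exp_neg_mul_zero hb using 1
    simp only [pow_zero, Nat.factorial_zero, Nat.cast_one, harmonic_zero, Rat.cast_zero]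
    ring
  | succ n ih =>
    have hcoeff : (fun k : ℕ => -b * ((-b) ^ k / k.factorial)) =
        fun k : ℕ => ((k : ℝ) + 1) * ((-b) ^ (k + 1) / (k + 1).factorial) := by
      ext k
      rw [Nat.factorial_succ]
      push_cast
      field_simp
      ring
    have hlim : Tendsto (fun x => Real.exp (-b * x) / x ^ (n + 1)) atTop (𝓝 0) :=
      (Real.tendsto_exp_atBot.comp (tendsto_id.const_mul_atTop_of_neg
        (neg_neg_iff_pos.2 hb))).div_atTop (tendsto_pow_atTop n.succ_ne_zero)
    convert (hcoeff ▸ ih.const_mul (-b)).succ_of_hasDerivAt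
      (fun x _ => hasDerivAt_exp_mul (-b) x)
      ((isLittleO_exp_mul_sub_taylor (-b) (n + 1)).mono nhdsWithin_le_nhds)
      (fun ε hε => integrableOn_Ioi_div_pow (exp_neg_integrableOn_Ioi ε hb) hε _) hlim using 1
    rw [harmonic_succ, Nat.factorial_succ]
    push_cast
    field_simp
    ring

end ExpNegMul

/-- Finite part of `∫_0^∞ e^{-bx}/x^m dx`: the regularized limit exists and equals
`((-1)^m b^{m-1}/(m-1)!)(ln b − H_{m-1} + γ)`. -/
theorem stmt_4 (m : ℕ) (hm : 1 ≤ m) (b : ℝ) (hb : 0 < b) :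
    Tendsto
      (fun ε : ℝ =>
        (∫ x in Set.Ioi ε, Real.exp (-b * x) / x ^ m) -
          ((∑ k ∈ Finset.range (m - 1),
              (-b) ^ k / (Nat.factorial k *
                (((m - k - 1 : ℕ) : ℝ) * ε ^ (m - k - 1)))) -
            ((-b) ^ (m - 1) / Nat.factorial (m - 1)) * Real.log ε))
      (nhdsWithin 0 (Set.Ioi 0))
      (nhds (((-1 : ℝ) ^ m * b ^ (m - 1) / Nat.factorial (m - 1)) *
        (Real.log b - (∑ j ∈ Finset.range (m - 1), (1 : ℝ) / (j + 1)) +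
          Real.eulerMascheroniConstant))) := by
  obtain ⟨n, rfl⟩ := Nat.exists_eq_add_of_le' hm
  convert (hasFinitePart_exp_neg_mul hb n).tendsto using 2 with ε
  · simp only [divergentPart, Nat.add_sub_cancel, Nat.sub_right_comm _ _ 1, div_div]
  · simp only [Nat.add_sub_cancel, harmonic, neg_pow b]
    push_cast
    simp only [one_div]
    ring
end

section
/- Let F : ℂ → ℂ be entire with F real-valued on the real axis, let f be its restriction to ℝ, and let 0 < ω < a. Then ∫_0^a f(x)/(ω + x) dx = (1/(2π)) ∫_0^{2π} F(a e^{iθ}) (ln a + iθ) (a e^{iθ}/(ω + a e^{iθ})) dθ − F(-ω) (ln ω + iπ); in particular the right-hand side is real. -/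
open Filter MeasureTheory Set Complex

/-!
Write `F z = F (-ω) + (z + ω) g z` with `g` holomorphic. For `g`, integrate by parts along the
circle against a primitive `H` of `g`: the factor `ln a + iθ` jumps by `2πi` over one turn, which
produces `2π H(a)`, while the mean value property turns the remaining integral of `H`
into `2π H(0)`.

This leaves the constant function, that is, the kernel `z / (ω + z) = 1 - ω / (ω + z)`, whose pole
is inside the circle. The reflection `θ ↦ 2π - θ` sends `z` to `a² / z`, hence `ω / (ω + z)` to
`c z / (1 + c z)` with `c = ω / a²`; the pole moves outside, and the holomorphic case applies again.
-/

lemma integral_div_add_mul_eq_log_sub_log {b c : ℂ} {s t : ℝ}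
    (h : ∀ x ∈ uIcc s t, b + c * x ∈ slitPlane) :
    ∫ x in s..t, c / (b + c * x) = log (b + c * t) - log (b + c * s) := by
  have hderiv (x : ℝ) : HasDerivAt (fun x : ℝ ↦ b + c * x) c x := by
    simpa using ((hasDerivAt_id x).ofReal_comp.const_mul c).const_add b
  refine intervalIntegral.integral_eq_sub_of_hasDerivAt
    (fun x hx ↦ (hderiv x).clog_real (h x hx)) (ContinuousOn.intervalIntegrable ?_)
  exact continuousOn_const.div (by fun_prop) fun x hx ↦ slitPlane_ne_zero (h x hx)

lemma add_ofReal_mem_slitPlane {z : ℂ} (hz : z ∈ slitPlane) {x : ℝ} (hx : 0 ≤ x) :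
    z + x ∈ slitPlane := by
  simp only [mem_slitPlane_iff, add_re, add_im, ofReal_re, ofReal_im, add_zero] at hz ⊢
  exact hz.imp_left fun h ↦ by positivity

section Circle

variable {R r : ℝ} {c : ℂ}

lemma circleMap_mem_ball_of_abs_lt (h : |r| < R) (θ : ℝ) : circleMap c r θ ∈ Metric.ball c R :=
  Metric.sphere_subset_closedBall.trans (Metric.closedBall_subset_ball h)
    (circleMap_mem_sphere' c r θ)

lemma add_ofReal_mem_ball_of_mem_uIcc (h : |r| < R) {x : ℝ} (hx : x ∈ uIcc 0 r) :
    c + x ∈ Metric.ball c R := by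
  have hxr : |x| ≤ |r| := by simpa using abs_sub_left_of_mem_uIcc hx
  simpa using hxr.trans_lt h

lemma integral_circleMap_of_diffContOnCl {h : ℂ → ℂ} (hh : DiffContOnCl ℂ h (Metric.ball c |r|)) :
    ∫ θ in (0 : ℝ)..(2 * Real.pi), h (circleMap c r θ) = 2 * Real.pi * h c := by
  rw [← hh.circleAverage, Real.circleAverage_def, real_smul]
  push_cast
  rw [mul_inv_cancel_left₀ (by exact_mod_cast Real.two_pi_pos.ne')]

lemma hasDerivAt_const_add_I_mul (k : ℂ) (θ : ℝ) :
    HasDerivAt (fun θ : ℝ ↦ k + I * θ) I θ := by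
  simpa using ((hasDerivAt_id θ).ofReal_comp.const_mul I).const_add k

lemma integral_comp_add_ofReal_eq_sub {G H : ℂ → ℂ} (hG : ContinuousOn G (Metric.ball c R))
    (hH : ∀ z ∈ Metric.ball c R, HasDerivAt H (G z) z) (hr : |r| < R) :
    ∫ x in (0 : ℝ)..r, G (c + x) = H (c + r) - H c := by
  have hderiv (x : ℝ) (hx : x ∈ uIcc 0 r) : HasDerivAt (fun x : ℝ ↦ H (c + x)) (G (c + x)) x :=
    ((hH _ (add_ofReal_mem_ball_of_mem_uIcc hr hx)).comp_const_add c x).comp_ofReal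
  have hint : IntervalIntegrable (fun x : ℝ ↦ G (c + x)) volume 0 r :=
    (hG.comp (by fun_prop) fun x hx ↦ add_ofReal_mem_ball_of_mem_uIcc hr hx).intervalIntegrable
  simpa using intervalIntegral.integral_eq_sub_of_hasDerivAt hderiv hint

lemma integral_add_I_mul_circleMap_mul {G : ℂ → ℂ} (hG : DifferentiableOn ℂ G (Metric.ball c R))
    (hr : |r| < R) (k : ℂ) :
    ∫ θ in (0 : ℝ)..(2 * Real.pi), (k + I * θ) * (circleMap 0 r θ * G (circleMap c r θ)) =
      2 * Real.pi * ∫ x in (0 : ℝ)..r, G (c + x) := by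
  obtain ⟨H, hH⟩ := hG.isExactOn_ball
  have hmean : ∫ θ in (0 : ℝ)..(2 * Real.pi), H (circleMap c r θ) = 2 * Real.pi * H c := by
    have hHd : DifferentiableOn ℂ H (Metric.ball c R) :=
      fun z hz ↦ (hH z hz).differentiableAt.differentiableWithinAt
    exact integral_circleMap_of_diffContOnCl
      (hHd.diffContOnCl_ball (Metric.closedBall_subset_ball hr))
  have hcircle (θ : ℝ) : HasDerivAt (fun θ ↦ H (circleMap c r θ))
      (G (circleMap c r θ) * (circleMap 0 r θ * I)) θ :=
    (hH _ (circleMap_mem_ball_of_abs_lt hr θ)).comp θ (hasDerivAt_circleMap c r θ)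
  have hcont : Continuous fun θ ↦ G (circleMap c r θ) * (circleMap 0 r θ * I) :=
    (hG.continuousOn.comp_continuous (continuous_circleMap c r)
      (circleMap_mem_ball_of_abs_lt hr)).mul ((continuous_circleMap 0 r).mul continuous_const)
  have hparts := intervalIntegral.integral_mul_deriv_eq_deriv_mul (a := 0) (b := 2 * Real.pi)
    (fun θ _ ↦ hasDerivAt_const_add_I_mul k θ) (fun θ _ ↦ hcircle θ)
    intervalIntegrable_const (hcont.intervalIntegrable _ _)
  have hend : circleMap c r (2 * Real.pi) = c + r := by simp [circleMap]
  have hstart : circleMap c r 0 = c + r := by simp [circleMap]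
  rw [intervalIntegral.integral_const_mul, hmean, hend, hstart] at hparts
  refine mul_left_cancel₀ I_ne_zero ?_
  calc I * ∫ θ in (0 : ℝ)..(2 * Real.pi),
        (k + I * θ) * (circleMap 0 r θ * G (circleMap c r θ))
      = ∫ θ in (0 : ℝ)..(2 * Real.pi),
          (k + I * θ) * (G (circleMap c r θ) * (circleMap 0 r θ * I)) := by
        rw [← intervalIntegral.integral_const_mul]
        congr 1 with θ
        ring
    _ = I * (2 * Real.pi * ∫ x in (0 : ℝ)..r, G (c + x)) := by
        rw [hparts, integral_comp_add_ofReal_eq_sub hG.continuousOn hH hr]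
        push_cast
        ring

end Circle

section Kernel

variable {ω : ℂ} {a : ℝ}

lemma add_circleMap_zero_ne_zero (ha : ‖ω‖ < a) (θ : ℝ) : ω + circleMap 0 a θ ≠ 0 := by
  have hω : -ω ∈ Metric.ball 0 a := by simpa using ha
  rw [add_comm, Ne, add_eq_zero_iff_eq_neg]
  exact circleMap_ne_mem_ball hω θ

lemma circleMap_zero_two_pi_sub (a θ : ℝ) :
    circleMap 0 a (2 * Real.pi - θ) = a ^ 2 / circleMap 0 a θ := by
  rw [sub_eq_neg_add, periodic_circleMap 0 a (-θ), circleMap_zero, circleMap_zero,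
    div_mul_eq_div_div, sq, mul_self_div_self, ofReal_neg, neg_mul, exp_neg, div_eq_mul_inv]

lemma integral_add_I_mul_circleMap_mul_div_one_add_mul {c : ℂ} (hc : ‖c‖ * |a| < 1) (k : ℂ) :
    ∫ θ in (0 : ℝ)..(2 * Real.pi),
        (k + I * θ) * (circleMap 0 a θ * (c / (1 + c * circleMap 0 a θ))) =
      2 * Real.pi * log (1 + c * a) := by
  obtain ⟨R, haR, hcR⟩ : ∃ R, |a| < R ∧ ‖c‖ * R < 1 :=
    (((continuous_const_mul ‖c‖).tendsto |a|).eventually_lt_const hc).exists_gt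
  have hslit {z : ℂ} (hz : z ∈ Metric.ball 0 R) : 1 + c * z ∈ slitPlane := by
    refine mem_slitPlane_of_norm_lt_one (lt_of_le_of_lt ?_ hcR)
    rw [norm_mul]
    gcongr
    exact (mem_ball_zero_iff.1 hz).le
  have hdiff : DifferentiableOn ℂ (fun z ↦ c / (1 + c * z)) (Metric.ball 0 R) :=
    (differentiableOn_const c).div (by fun_prop) fun z hz ↦ slitPlane_ne_zero (hslit hz)
  rw [integral_add_I_mul_circleMap_mul hdiff haR]
  simp only [zero_add]
  rw [integral_div_add_mul_eq_log_sub_log fun x hx ↦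
    hslit (by simpa using add_ofReal_mem_ball_of_mem_uIcc (c := 0) haR hx)]
  simp

lemma integral_add_I_mul_div_add_circleMap (ha : ‖ω‖ < a) (k : ℂ) :
    ∫ θ in (0 : ℝ)..(2 * Real.pi), (k + I * θ) * (ω / (ω + circleMap 0 a θ)) =
      -(2 * Real.pi * log (1 + ω / a)) := by
  have ha0 : 0 < a := (norm_nonneg ω).trans_lt ha
  have haC : (a : ℂ) ≠ 0 := ofReal_ne_zero.2 ha0.ne'
  have hc : ‖ω / a ^ 2‖ * |a| < 1 := by
    rw [norm_div, norm_pow, norm_real, Real.norm_eq_abs, abs_of_pos ha0]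
    field_simp
    exact ha
  have hreflect (θ : ℝ) : ω / (ω + circleMap 0 a (2 * Real.pi - θ)) =
      circleMap 0 a θ * (ω / a ^ 2 / (1 + ω / a ^ 2 * circleMap 0 a θ)) := by
    have hz : circleMap 0 a θ ≠ 0 := circleMap_ne_center ha0.ne'
    rw [circleMap_zero_two_pi_sub]
    field_simp
    ring
  calc ∫ θ in (0 : ℝ)..(2 * Real.pi), (k + I * θ) * (ω / (ω + circleMap 0 a θ))
      = ∫ θ in (0 : ℝ)..(2 * Real.pi), (k + I * (2 * Real.pi - θ : ℝ)) *
          (ω / (ω + circleMap 0 a (2 * Real.pi - θ))) := by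
        rw [intervalIntegral.integral_comp_sub_left
          (fun θ : ℝ ↦ (k + I * θ) * (ω / (ω + circleMap 0 a θ)))]
        simp
    _ = -∫ θ in (0 : ℝ)..(2 * Real.pi), (-(k + 2 * Real.pi * I) + I * θ) *
          (circleMap 0 a θ * (ω / a ^ 2 / (1 + ω / a ^ 2 * circleMap 0 a θ))) := by
        rw [← intervalIntegral.integral_neg]
        congr 1 with θ
        rw [hreflect]
        push_cast
        ring
    _ = -(2 * Real.pi * log (1 + ω / a)) := by
        rw [integral_add_I_mul_circleMap_mul_div_one_add_mul hc]
        congr 4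
        field_simp

lemma integral_const_add_I_mul (k : ℂ) :
    ∫ θ in (0 : ℝ)..(2 * Real.pi), (k + I * θ) = 2 * Real.pi * (k + Real.pi * I) := by
  rw [intervalIntegral.integral_add (by simp) (Continuous.intervalIntegrable (by fun_prop) _ _),
    intervalIntegral.integral_const_mul, intervalIntegral.integral_ofReal, integral_id,
    intervalIntegral.integral_const, real_smul]
  push_cast
  ring

lemma integral_log_add_I_mul_circleMap_div_add_circleMap (ha : ‖ω‖ < a) :
    ∫ θ in (0 : ℝ)..(2 * Real.pi),
        (Real.log a + I * θ) * (circleMap 0 a θ / (ω + circleMap 0 a θ)) =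
      2 * Real.pi * (log (ω + a) + Real.pi * I) := by
  have ha0 : 0 < a := (norm_nonneg ω).trans_lt ha
  have haC : (a : ℂ) ≠ 0 := ofReal_ne_zero.2 ha0.ne'
  have hne : 1 + ω / a ≠ 0 := by
    refine slitPlane_ne_zero (mem_slitPlane_of_norm_lt_one ?_)
    rwa [norm_div, norm_real, Real.norm_of_nonneg ha0.le, div_lt_one ha0]
  have hlog : log (ω + a) = Real.log a + log (1 + ω / a) := by
    rw [← log_ofReal_mul ha0 hne]
    congr 1
    field_simp
    ring
  have hsplit (θ : ℝ) : (Real.log a + I * θ) * (circleMap 0 a θ / (ω + circleMap 0 a θ)) =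
      (Real.log a + I * θ) - (Real.log a + I * θ) * (ω / (ω + circleMap 0 a θ)) := by
    have hden := add_circleMap_zero_ne_zero ha θ
    field_simp
    ring
  have hcont : Continuous fun θ : ℝ ↦ (Real.log a + I * θ) * (ω / (ω + circleMap 0 a θ)) :=
    (by fun_prop : Continuous fun θ : ℝ ↦ (Real.log a + I * θ : ℂ)).mul
      (continuous_const.div (continuous_const.add (continuous_circleMap 0 a))
        (add_circleMap_zero_ne_zero ha))
  simp only [hsplit]
  rw [intervalIntegral.integral_sub (Continuous.intervalIntegrable (by fun_prop) _ _)
    (hcont.intervalIntegrable _ _), integral_const_add_I_mul,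
    integral_add_I_mul_div_add_circleMap ha, hlog]
  ring

end Kernel

section PoleSubtraction

variable {F : ℂ → ℂ} {ω : ℂ} {a R : ℝ}

lemma div_add_eq_dslope_neg_add {z : ℂ} (h : ω + z ≠ 0) :
    F z / (ω + z) = dslope F (-ω) z + F (-ω) / (ω + z) := by
  have hslope : (ω + z) * dslope F (-ω) z = F z - F (-ω) := by
    simpa [add_comm] using sub_smul_dslope F (-ω) z
  rw [div_eq_iff h, add_mul, div_mul_cancel₀ _ h]
  linear_combination -hslope

lemma differentiableOn_dslope_neg (hF : DifferentiableOn ℂ F (Metric.ball 0 R)) (hω : ‖ω‖ < R) :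
    DifferentiableOn ℂ (dslope F (-ω)) (Metric.ball 0 R) :=
  (differentiableOn_dslope (Metric.isOpen_ball.mem_nhds (by simpa using hω))).2 hF

lemma integral_div_add_eq_integral_dslope_add (hF : DifferentiableOn ℂ F (Metric.ball 0 R))
    (hω : ω ∈ slitPlane) (hωR : ‖ω‖ < R) (ha : 0 ≤ a) (haR : a < R) :
    ∫ x in (0 : ℝ)..a, F x / (ω + x) =
      (∫ x in (0 : ℝ)..a, dslope F (-ω) x) + F (-ω) * (log (ω + a) - log ω) := by
  have hslit (x : ℝ) (hx : x ∈ uIcc 0 a) : ω + x ∈ slitPlane :=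
    add_ofReal_mem_slitPlane hω (by rw [uIcc_of_le ha] at hx; exact hx.1)
  have hlog : ∫ x in (0 : ℝ)..a, F (-ω) / (ω + x) = F (-ω) * (log (ω + a) - log ω) := by
    have hkernel := integral_div_add_mul_eq_log_sub_log (b := ω) (c := 1) (s := 0) (t := a)
      fun x hx ↦ by simpa using hslit x hx
    simp only [one_mul, ofReal_zero, add_zero] at hkernel
    simp only [← hkernel, ← intervalIntegral.integral_const_mul, mul_one_div]
  have hdslope : IntervalIntegrable (fun x : ℝ ↦ dslope F (-ω) x) volume 0 a := by
    refine ((differentiableOn_dslope_neg hF hωR).continuousOn.comp (by fun_prop)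
      fun x hx ↦ ?_).intervalIntegrable
    simpa using add_ofReal_mem_ball_of_mem_uIcc (c := 0) (by rwa [abs_of_nonneg ha]) hx
  have hpole : IntervalIntegrable (fun x : ℝ ↦ F (-ω) / (ω + x)) volume 0 a :=
    (continuousOn_const.div (by fun_prop)
      fun x hx ↦ slitPlane_ne_zero (hslit x hx)).intervalIntegrable
  rw [← hlog, ← intervalIntegral.integral_add hdslope hpole]
  exact intervalIntegral.integral_congr fun x hx ↦
    div_add_eq_dslope_neg_add (slitPlane_ne_zero (hslit x hx))

lemma integral_mul_log_add_I_mul_circleMap_div_add_circleMap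
    (hF : DifferentiableOn ℂ F (Metric.ball 0 R)) (ha : ‖ω‖ < a) (haR : a < R) :
    ∫ θ in (0 : ℝ)..(2 * Real.pi), F (circleMap 0 a θ) * (Real.log a + I * θ) *
        (circleMap 0 a θ / (ω + circleMap 0 a θ)) =
      2 * Real.pi * ((∫ x in (0 : ℝ)..a, dslope F (-ω) x) +
        F (-ω) * (log (ω + a) + Real.pi * I)) := by
  have habs : |a| < R := by rwa [abs_of_pos ((norm_nonneg ω).trans_lt ha)]
  have hg := differentiableOn_dslope_neg hF (ha.trans haR)
  have hsplit (θ : ℝ) : F (circleMap 0 a θ) * (Real.log a + I * θ) *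
        (circleMap 0 a θ / (ω + circleMap 0 a θ)) =
      (Real.log a + I * θ) * (circleMap 0 a θ * dslope F (-ω) (circleMap 0 a θ)) +
        F (-ω) * ((Real.log a + I * θ) * (circleMap 0 a θ / (ω + circleMap 0 a θ))) := by
    linear_combination (Real.log a + I * θ) * circleMap 0 a θ *
      div_add_eq_dslope_neg_add (F := F) (add_circleMap_zero_ne_zero ha θ)
  have hangle : Continuous fun θ : ℝ ↦ (Real.log a + I * θ : ℂ) := by fun_prop
  have hdslope : Continuous fun θ : ℝ ↦
      (Real.log a + I * θ) * (circleMap 0 a θ * dslope F (-ω) (circleMap 0 a θ)) :=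
    hangle.mul ((continuous_circleMap 0 a).mul
      (hg.continuousOn.comp_continuous (continuous_circleMap 0 a)
        (circleMap_mem_ball_of_abs_lt habs)))
  have hpole : Continuous fun θ : ℝ ↦
      F (-ω) * ((Real.log a + I * θ) * (circleMap 0 a θ / (ω + circleMap 0 a θ))) :=
    continuous_const.mul (hangle.mul ((continuous_circleMap 0 a).div
      (continuous_const.add (continuous_circleMap 0 a)) (add_circleMap_zero_ne_zero ha)))
  simp only [hsplit]
  rw [intervalIntegral.integral_add (hdslope.intervalIntegrable _ _) (hpole.intervalIntegrable _ _),
    intervalIntegral.integral_const_mul, integral_add_I_mul_circleMap_mul hg habs,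
    integral_log_add_I_mul_circleMap_div_add_circleMap ha]
  simp only [zero_add]
  ring

end PoleSubtraction

theorem stmt_8_general {F : ℂ → ℂ} {ω : ℂ} {a R : ℝ} (hF : DifferentiableOn ℂ F (Metric.ball 0 R))
    (hω : ω ∈ slitPlane) (ha : ‖ω‖ < a) (haR : a < R) :
    ∫ x in (0 : ℝ)..a, F x / (ω + x) =
      (1 / (2 * Real.pi)) * (∫ θ in (0 : ℝ)..(2 * Real.pi),
          F (a * exp (θ * I)) * (Real.log a + I * θ) *
            (a * exp (θ * I) / (ω + a * exp (θ * I)))) -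
        F (-ω) * (log ω + Real.pi * I) := by
  have ha0 : 0 ≤ a := (norm_nonneg ω).trans ha.le
  simp only [← circleMap_zero]
  rw [integral_div_add_eq_integral_dslope_add hF hω (ha.trans haR) ha0 haR,
    integral_mul_log_add_I_mul_circleMap_div_add_circleMap hF ha haR]
  field_simp
  ring

/-- Contour integral representation of the incomplete Stieltjes transform
`∫_0^a f(x)/(ω+x) dx` for an entire `F` real on the real axis, `0 < ω < a`. -/
theorem stmt_8 (F : ℂ → ℂ) (hF : Differentiable ℂ F)
    (hreal : ∀ x : ℝ, (F x).im = 0)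
    (f : ℝ → ℝ) (hf : ∀ x : ℝ, f x = (F x).re)
    (ω a : ℝ) (hω : 0 < ω) (ha : ω < a) :
    ((∫ x in (0 : ℝ)..a, f x / (ω + x) : ℝ) : ℂ) =
      (1 / (2 * (Real.pi : ℂ))) *
        (∫ θ in (0 : ℝ)..(2 * Real.pi),
          F ((a : ℂ) * Complex.exp ((θ : ℂ) * Complex.I)) *
            ((Real.log a : ℂ) + Complex.I * (θ : ℂ)) *
            ((a : ℂ) * Complex.exp ((θ : ℂ) * Complex.I) /
              ((ω : ℂ) + (a : ℂ) * Complex.exp ((θ : ℂ) * Complex.I)))) -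
      F (-(ω : ℂ)) * ((Real.log ω : ℂ) + (Real.pi : ℂ) * Complex.I) := by
  have hfF (x : ℝ) : (f x : ℂ) = F x := Complex.ext (hf x) (hreal x).symm
  simpa [← intervalIntegral.integral_ofReal, hfF, ofReal_log hω.le] using
    stmt_8_general hF.differentiableOn (ofReal_mem_slitPlane.2 hω)
      (by rwa [norm_real, Real.norm_of_nonneg hω.le]) (lt_add_one a)
end

section
/- Let f : ℝ → ℝ admit an entire complex extension with Taylor coefficients c_j = f^{(j)}(0)/j!, and let 0 < ω < a. Then the series Σ_{k=0}^{∞} (-ω)^k ⨍_0^a f(x)/x^{k+1} dx converges absolutely and ∫_0^a f(x)/(ω + x) dx = Σ_{k=0}^{∞} (-ω)^k ⨍_0^a f(x)/x^{k+1} dx − f(-ω) ln ω, where f(-ω) denotes the value of the entire extension at -ω. -/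
open Filter MeasureTheory Set

/-!
The map sending `f` to `⨍_0^a f(x)/x^{k+1} dx` acts on the power series of `f` term by term, with
`⨍_0^a x^{n-1} dx = a^n/n` for `n ≠ 0` and `ln a` for `n = 0`. These values are `O(a^n)`, so the
double series over `k` and over the Taylor coefficients is dominated by
`Σ_k (ω/a)^k · Σ_j |c_j| a^j` and may be summed in either order. Summing over `k` first leaves the
identity for a monomial `x^j`: for `j = 0` it is the logarithm series for `ln(a + ω)`, and
`x^{j+1}/(ω+x) = x^j - ω x^j/(ω+x)` carries it from `j` to `j + 1`.
-/

section ZpowPrimitive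

/-- The antiderivative of `x ^ (n - 1)` on `(0, ∞)` whose expansion at `0` has no constant term; its
value at `a` is therefore the finite part of `∫ x in 0..a, x ^ (n - 1)`. -/
noncomputable def zpowPrimitive (n : ℤ) (x : ℝ) : ℝ :=
  if n = 0 then Real.log x else x ^ n / n

theorem zpowPrimitive_zero (x : ℝ) : zpowPrimitive 0 x = Real.log x :=
  if_pos rfl

theorem zpowPrimitive_of_ne_zero {n : ℤ} (hn : n ≠ 0) (x : ℝ) : zpowPrimitive n x = x ^ n / n :=
  if_neg hn

theorem integral_zpow_sub_one (n : ℤ) {u b : ℝ} (hu : 0 < u) (hb : 0 < b) :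
    ∫ x in u..b, x ^ (n - 1) = zpowPrimitive n b - zpowPrimitive n u := by
  rcases eq_or_ne n 0 with rfl | hn
  · simp only [zero_sub, zpow_neg_one, zpowPrimitive_zero]
    rw [integral_inv_of_pos hu hb, Real.log_div hb.ne' hu.ne']
  · have hn' : n - 1 ≠ -1 := by lia
    rw [integral_zpow (Or.inr ⟨hn', notMem_uIcc_of_lt hu hb⟩), zpowPrimitive_of_ne_zero hn,
      zpowPrimitive_of_ne_zero hn]
    push_cast
    rw [sub_add_cancel, sub_add_cancel, sub_div]

theorem integral_pow_mul_inv_pow_succ (j k : ℕ) {u b : ℝ} (hu : 0 < u) (hb : 0 < b) :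
    ∫ x in u..b, x ^ j * (x ^ (k + 1))⁻¹ =
      zpowPrimitive (j - k) b - zpowPrimitive (j - k) u := by
  rw [← integral_zpow_sub_one _ hu hb]
  refine intervalIntegral.integral_congr fun x hx => ?_
  have hx0 : x ≠ 0 := ((lt_min hu hb).trans_le hx.1).ne'
  rw [sub_sub, zpow_sub₀ hx0, div_eq_mul_inv]
  norm_cast

theorem abs_zpowPrimitive_le_zpow {n : ℤ} (hn : n ≠ 0) {x : ℝ} (hx : 0 ≤ x) :
    |zpowPrimitive n x| ≤ x ^ n := by
  have hn1 : (1 : ℝ) ≤ |(n : ℝ)| := mod_cast Int.one_le_abs hn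
  rw [zpowPrimitive_of_ne_zero hn, abs_div, abs_of_nonneg (zpow_nonneg hx n)]
  exact div_le_self (zpow_nonneg hx n) hn1

theorem abs_zpowPrimitive_le (n : ℤ) {x : ℝ} (hx : 0 ≤ x) :
    |zpowPrimitive n x| ≤ x ^ n * (1 + |Real.log x|) := by
  rcases eq_or_ne n 0 with rfl | hn
  · simp [zpowPrimitive_zero]
  · exact (abs_zpowPrimitive_le_zpow hn hx).trans
      (le_mul_of_one_le_right (zpow_nonneg hx n) (by linarith [abs_nonneg (Real.log x)]))

theorem tendsto_zpowPrimitive_nhds_zero {n : ℤ} (hn : 0 < n) :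
    Tendsto (zpowPrimitive n) (nhds 0) (nhds 0) := by
  have hcont : ContinuousAt (fun x : ℝ => x ^ n / n) 0 :=
    (continuousAt_zpow₀ 0 n (Or.inr hn.le)).div_const _
  simpa only [ContinuousAt, funext (zpowPrimitive_of_ne_zero hn.ne'), zero_zpow n hn.ne', zero_div]
    using hcont

end ZpowPrimitive

section Monomial

variable {ω a : ℝ}

theorem integral_pow_succ_mul_inv_add (hω : 0 < ω) (ha : 0 ≤ a) (j : ℕ) :
    ∫ x in (0 : ℝ)..a, x ^ (j + 1) * (ω + x)⁻¹ =
      a ^ (j + 1) / (j + 1) - ω * ∫ x in (0 : ℝ)..a, x ^ j * (ω + x)⁻¹ := by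
  have hne : ∀ x ∈ uIcc 0 a, ω + x ≠ 0 := fun x hx => by
    rw [uIcc_of_le ha] at hx
    exact (add_pos_of_pos_of_nonneg hω hx.1).ne'
  have hint : IntervalIntegrable (fun x : ℝ => x ^ j * (ω + x)⁻¹) volume 0 a :=
    ContinuousOn.intervalIntegrable
      ((continuous_pow j).continuousOn.mul (ContinuousOn.inv₀ (by fun_prop) hne))
  have hpow : ∫ x in (0 : ℝ)..a, x ^ j = a ^ (j + 1) / (j + 1) := by simp
  rw [← hpow, ← intervalIntegral.integral_const_mul, ← intervalIntegral.integral_sub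
    (intervalIntegral.intervalIntegrable_pow j) (hint.const_mul ω)]
  refine intervalIntegral.integral_congr fun x hx => ?_
  have := hne x hx
  field_simp
  ring

theorem integral_inv_add (hω : 0 < ω) (ha : 0 ≤ a) :
    ∫ x in (0 : ℝ)..a, (ω + x)⁻¹ = Real.log (ω + a) - Real.log ω := by
  have hωa : 0 < ω + a := by positivity
  rw [intervalIntegral.integral_comp_add_left (fun x => x⁻¹) ω, add_zero,
    integral_inv_of_pos hω hωa, Real.log_div hωa.ne' hω.ne']

theorem hasSum_neg_pow_mul_zpowPrimitive_neg (hω : 0 < ω) (ha : ω < a) :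
    HasSum (fun k : ℕ => (-ω) ^ k * zpowPrimitive (-k) a) (Real.log (ω + a)) := by
  have ha0 : 0 < a := hω.trans ha
  have hratio : |-(ω / a)| < 1 := by
    rwa [abs_neg, abs_of_pos (by positivity), div_lt_one ha0]
  have hlog : Real.log (ω + a) = Real.log a + Real.log (1 - -(ω / a)) := by
    rw [← Real.log_mul ha0.ne' (by rw [sub_neg_eq_add]; positivity)]
    congr 1
    field_simp
    ring
  have hseries := (Real.hasSum_pow_div_log_of_abs_lt_one hratio).neg
  rw [neg_neg] at hseries
  have hterm : ∀ k : ℕ, (-ω) ^ (k + 1) * zpowPrimitive (-(k + 1 : ℕ)) a =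
      -((-(ω / a)) ^ (k + 1) / (k + 1)) := fun k => by
    rw [zpowPrimitive_of_ne_zero (by lia), zpow_neg, zpow_natCast, neg_div' a ω, div_pow]
    push_cast
    field_simp
  rw [← funext hterm] at hseries
  rw [hlog]
  simpa [zpowPrimitive_zero] using
    HasSum.zero_add (f := fun k : ℕ => (-ω) ^ k * zpowPrimitive (-k) a) hseries

theorem hasSum_neg_pow_mul_zpowPrimitive (hω : 0 < ω) (ha : ω < a) (j : ℕ) :
    HasSum (fun k : ℕ => (-ω) ^ k * zpowPrimitive (j - k) a)
      ((∫ x in (0 : ℝ)..a, x ^ j * (ω + x)⁻¹) + (-ω) ^ j * Real.log ω) := by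
  have ha0 : 0 < a := hω.trans ha
  induction j with
  | zero =>
    simpa [integral_inv_add hω ha0.le] using hasSum_neg_pow_mul_zpowPrimitive_neg hω ha
  | succ j ih =>
    have hhead : zpowPrimitive (j + 1 : ℕ) a = a ^ (j + 1) / (j + 1) := by
      rw [zpowPrimitive_of_ne_zero (by lia), zpow_natCast]
      push_cast
      rfl
    have hshift : ∀ k : ℕ, (-ω) ^ (k + 1) * zpowPrimitive ((j + 1 : ℕ) - (k + 1 : ℕ)) a =
        -ω * ((-ω) ^ k * zpowPrimitive (j - k) a) := fun k => by
      rw [pow_succ', mul_assoc, Nat.cast_succ, Nat.cast_succ, add_sub_add_right_eq_sub]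
    have htail := ih.mul_left (-ω)
    rw [← funext hshift] at htail
    convert HasSum.zero_add (f := fun k : ℕ => (-ω) ^ k * zpowPrimitive ((j + 1 : ℕ) - k) a) htail
      using 1
    rw [integral_pow_succ_mul_inv_add hω ha0.le, Nat.cast_zero, sub_zero, hhead]
    ring

end Monomial

section PowerSeries

variable {E : Type*} [NormedAddCommGroup E] [NormedSpace ℝ E] {f : ℝ → E} {c : ℕ → E} {a : ℝ}

/-- The finite part `⨍_0^a f(x) / x^(k+1) dx` exists and equals `L`, where `c j` stands for the
Taylor coefficients of `f` at `0`: they determine the divergent terms to be removed. -/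
def HasFinitePart_s9 (f : ℝ → E) (c : ℕ → E) (k : ℕ) (a : ℝ) (L : E) : Prop :=
  Tendsto
    (fun ε : ℝ =>
      (∫ x in ε..a, (x ^ (k + 1))⁻¹ • f x) -
        ((∑ j ∈ Finset.range k, (((k - j : ℕ) : ℝ) * ε ^ (k - j))⁻¹ • c j) - Real.log ε • c k))
    (nhdsWithin 0 (Ioi 0)) (nhds L)

theorem sum_range_succ_zpowPrimitive_smul (c : ℕ → E) (k : ℕ) (x : ℝ) :
    ∑ j ∈ Finset.range (k + 1), zpowPrimitive (j - k) x • c j =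
      -((∑ j ∈ Finset.range k, (((k - j : ℕ) : ℝ) * x ^ (k - j))⁻¹ • c j) - Real.log x • c k) := by
  have hterm : ∀ j ∈ Finset.range k, zpowPrimitive (j - k) x • c j =
      -((((k - j : ℕ) : ℝ) * x ^ (k - j))⁻¹ • c j) := fun j hj => by
    have hjk : j < k := Finset.mem_range.mp hj
    have hexp : (j : ℤ) - k = -((k - j : ℕ) : ℤ) := by lia
    rw [hexp, zpowPrimitive_of_ne_zero (by lia), zpow_neg, zpow_natCast, ← neg_smul]
    push_cast
    rw [div_neg, mul_inv_rev, div_eq_mul_inv]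
  rw [Finset.sum_range_succ, Finset.sum_congr rfl hterm, Finset.sum_neg_distrib, sub_self,
    zpowPrimitive_zero]
  abel

theorem norm_zpowPrimitive_smul_le (ha : 0 < a) (j k : ℕ) (v : E) :
    ‖zpowPrimitive (j - k) a • v‖ ≤ ‖a ^ j • v‖ * ((1 + |Real.log a|) / a ^ k) := by
  calc ‖zpowPrimitive (j - k) a • v‖
      ≤ a ^ (j - k : ℤ) * (1 + |Real.log a|) * ‖v‖ := by
        rw [norm_smul, Real.norm_eq_abs]
        gcongr
        exact abs_zpowPrimitive_le _ ha.le
    _ = ‖a ^ j • v‖ * ((1 + |Real.log a|) / a ^ k) := by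
        rw [zpow_sub₀ ha.ne', zpow_natCast, zpow_natCast, norm_smul, norm_pow,
          Real.norm_of_nonneg ha.le]
        ring

theorem summable_norm_pow_mul_zpowPrimitive_smul {z : ℝ} (hc : Summable fun j => ‖a ^ j • c j‖)
    (hz : |z| < a) :
    Summable fun p : ℕ × ℕ => ‖(z ^ p.1 * zpowPrimitive (p.2 - p.1) a) • c p.2‖ := by
  have ha : 0 < a := (abs_nonneg z).trans_lt hz
  have hbound : Summable fun p : ℕ × ℕ =>
      (|z| / a) ^ p.1 * (‖a ^ p.2 • c p.2‖ * (1 + |Real.log a|)) :=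
    (summable_geometric_of_lt_one (by positivity) ((div_lt_one ha).mpr hz)).mul_of_nonneg
      (hc.mul_right _) (fun _ => by positivity) (fun _ => by positivity)
  refine hbound.of_nonneg_of_le (fun _ => norm_nonneg _) fun ⟨k, j⟩ => ?_
  calc ‖(z ^ k * zpowPrimitive (j - k) a) • c j‖
      = |z| ^ k * ‖zpowPrimitive (j - k) a • c j‖ := by
        rw [mul_smul, norm_smul, norm_pow, Real.norm_eq_abs]
    _ ≤ |z| ^ k * (‖a ^ j • c j‖ * ((1 + |Real.log a|) / a ^ k)) := by
        gcongr
        exact norm_zpowPrimitive_smul_le ha j k (c j)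
    _ = (|z| / a) ^ k * (‖a ^ j • c j‖ * (1 + |Real.log a|)) := by
        rw [div_pow]
        ring

theorem summable_norm_pow_smul_tsum_zpowPrimitive_smul {z : ℝ}
    (hc : Summable fun j => ‖a ^ j • c j‖) (hz : |z| < a) :
    Summable fun k : ℕ => ‖z ^ k • ∑' j : ℕ, zpowPrimitive (j - k) a • c j‖ := by
  have hdouble := summable_norm_pow_mul_zpowPrimitive_smul hc hz
  refine hdouble.prod.of_nonneg_of_le (fun _ => norm_nonneg _) fun k => ?_
  simp_rw [← tsum_const_smul'', smul_smul]
  exact norm_tsum_le_tsum_norm (hdouble.prod_factor k)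

variable [CompleteSpace E]

theorem hasSum_integral_pow_mul_smul {g : ℝ → ℝ} {u b r : ℝ}
    (hc : Summable fun j => ‖r ^ j • c j‖) (hu : u ∈ Icc (-r) r) (hb : b ∈ Icc (-r) r)
    (hf : ∀ x ∈ uIoc u b, HasSum (fun j => x ^ j • c j) (f x))
    (hg : IntervalIntegrable g volume u b) :
    HasSum (fun j => (∫ x in u..b, x ^ j * g x) • c j) (∫ x in u..b, g x • f x) := by
  simp_rw [← intervalIntegral.integral_smul_const]
  refine intervalIntegral.hasSum_integral_of_dominated_convergence
    (fun j x => ‖r ^ j • c j‖ * ‖g x‖) (fun j => ?_) (fun j => ae_of_all _ fun x hx => ?_)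
    (ae_of_all _ fun x _ => hc.mul_right _) ?_ (ae_of_all _ fun x hx => ?_)
  · exact ((continuous_pow j).aestronglyMeasurable.mul
      hg.def'.aestronglyMeasurable).smul_const (c j)
  · have hxr : |x| ≤ |r| :=
      (abs_le.mpr (uIcc_subset_Icc hu hb (uIoc_subset_uIcc hx))).trans (le_abs_self r)
    calc ‖(x ^ j * g x) • c j‖ = |x| ^ j * ‖c j‖ * ‖g x‖ := by
          rw [norm_smul, norm_mul, norm_pow, Real.norm_eq_abs x]
          ring
      _ ≤ |r| ^ j * ‖c j‖ * ‖g x‖ := by gcongr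
      _ = ‖r ^ j • c j‖ * ‖g x‖ := by rw [norm_smul, norm_pow, Real.norm_eq_abs r]
  · simp_rw [tsum_mul_right]
    exact hg.norm.const_mul _
  · simpa only [smul_smul, mul_comm] using (hf x hx).const_smul (g x)

theorem tendsto_tsum_zpowPrimitive_smul_nat_add (ha : 0 < a)
    (hc : Summable fun j => ‖a ^ j • c j‖) (k : ℕ) :
    Tendsto
      (fun ε : ℝ => ∑' i : ℕ, zpowPrimitive ((i + (k + 1) : ℕ) - k) ε • c (i + (k + 1)))
      (nhdsWithin 0 (Ioi 0)) (nhds 0) := by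
  have hbound : Summable fun i : ℕ => ‖a ^ (i + (k + 1)) • c (i + (k + 1))‖ / a ^ k :=
    ((summable_nat_add_iff (k + 1)).mpr hc).div_const _
  have hterm (i : ℕ) : Tendsto
      (fun ε : ℝ => zpowPrimitive ((i + (k + 1) : ℕ) - k) ε • c (i + (k + 1)))
      (nhdsWithin 0 (Ioi 0)) (nhds 0) := by
    have hlim := (tendsto_zpowPrimitive_nhds_zero
      (n := (i + (k + 1) : ℕ) - k) (by lia)).mono_left (nhdsWithin_le_nhds (s := Ioi 0))
    simpa only [zero_smul] using hlim.smul_const (c (i + (k + 1)))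
  have hle : ∀ᶠ ε : ℝ in nhdsWithin 0 (Ioi 0), ∀ i : ℕ,
      ‖zpowPrimitive ((i + (k + 1) : ℕ) - k) ε • c (i + (k + 1))‖ ≤
        ‖a ^ (i + (k + 1)) • c (i + (k + 1))‖ / a ^ k := by
    filter_upwards [Ioc_mem_nhdsGT ha] with ε ⟨hε, hεa⟩ i
    calc ‖zpowPrimitive ((i + (k + 1) : ℕ) - k) ε • c (i + (k + 1))‖
        ≤ ε ^ ((i + (k + 1) : ℕ) - k : ℤ) * ‖c (i + (k + 1))‖ := by
          rw [norm_smul, Real.norm_eq_abs]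
          gcongr
          exact abs_zpowPrimitive_le_zpow (by lia) hε.le
      _ ≤ a ^ ((i + (k + 1) : ℕ) - k : ℤ) * ‖c (i + (k + 1))‖ := by
          gcongr
          exact zpow_le_zpow_left₀ (by lia) hε.le hεa
      _ = ‖a ^ (i + (k + 1)) • c (i + (k + 1))‖ / a ^ k := by
          rw [zpow_sub₀ ha.ne', zpow_natCast, zpow_natCast, norm_smul, norm_pow,
            Real.norm_of_nonneg ha.le]
          ring
  simpa only [tsum_zero] using tendsto_tsum_of_dominated_convergence hbound hterm hle

theorem summable_zpowPrimitive_smul (ha : 0 < a) (hc : Summable fun j => ‖a ^ j • c j‖) (k : ℕ) :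
    Summable fun j : ℕ => zpowPrimitive (j - k) a • c j :=
  (hc.mul_right _).of_norm_bounded fun j => norm_zpowPrimitive_smul_le ha j k (c j)

theorem hasFinitePart_tsum_zpowPrimitive_smul (ha : 0 < a)
    (hc : Summable fun j => ‖a ^ j • c j‖)
    (hf : ∀ x ∈ Ioc 0 a, HasSum (fun j => x ^ j • c j) (f x)) (k : ℕ) :
    HasFinitePart_s9 f c k a (∑' j : ℕ, zpowPrimitive (j - k) a • c j) := by
  have hsum_a := summable_zpowPrimitive_smul ha hc k
  have hlim := (tendsto_const_nhds (x := ∑' j : ℕ, zpowPrimitive (j - k) a • c j)).sub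
    (tendsto_tsum_zpowPrimitive_smul_nat_add ha hc k)
  rw [sub_zero] at hlim
  refine hlim.congr' ?_
  filter_upwards [Ioc_mem_nhdsGT ha] with ε ⟨hε, hεa⟩
  have hint : IntervalIntegrable (fun x : ℝ => (x ^ (k + 1))⁻¹) volume ε a :=
    ContinuousOn.intervalIntegrable <| ContinuousOn.inv₀ (by fun_prop) fun x hx =>
      pow_ne_zero _ ((lt_min hε ha).trans_le hx.1).ne'
  have hdiff := hasSum_integral_pow_mul_smul hc ⟨by linarith, hεa⟩ ⟨by linarith, le_rfl⟩
    (fun x hx => hf x (by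
      rw [uIoc_of_le hεa] at hx
      exact ⟨hε.trans hx.1, hx.2⟩)) hint
  simp only [integral_pow_mul_inv_pow_succ _ k hε ha, sub_smul] at hdiff
  have hsum_ε := (hsum_a.hasSum.sub hdiff).summable
  simp only [sub_sub_cancel] at hsum_ε
  rw [← hdiff.tsum_eq, hsum_a.tsum_sub hsum_ε, ← hsum_ε.sum_add_tsum_nat_add (k + 1),
    sum_range_succ_zpowPrimitive_smul]
  abel

theorem tsum_neg_pow_smul_tsum_zpowPrimitive_smul {ω : ℝ} (hω : 0 < ω) (ha : ω < a)
    (hc : Summable fun j => ‖a ^ j • c j‖)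
    (hf : ∀ x ∈ Icc (-ω) a, HasSum (fun j => x ^ j • c j) (f x)) :
    ∑' k : ℕ, (-ω) ^ k • ∑' j : ℕ, zpowPrimitive (j - k) a • c j =
      (∫ x in (0 : ℝ)..a, (ω + x)⁻¹ • f x) + Real.log ω • f (-ω) := by
  have ha0 : 0 < a := hω.trans ha
  have hdouble := summable_norm_pow_mul_zpowPrimitive_smul (z := -ω) hc
    (by rwa [abs_neg, abs_of_pos hω])
  have hint : IntervalIntegrable (fun x : ℝ => (ω + x)⁻¹) volume 0 a :=
    ContinuousOn.intervalIntegrable <| ContinuousOn.inv₀ (by fun_prop) fun x hx => by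
      rw [uIcc_of_le ha0.le] at hx
      exact (add_pos_of_pos_of_nonneg hω hx.1).ne'
  have hintegral := hasSum_integral_pow_mul_smul hc ⟨by linarith, ha0.le⟩ ⟨by linarith, le_rfl⟩
    (fun x hx => hf x (by
      rw [uIoc_of_le ha0.le] at hx
      exact ⟨by linarith [hx.1], hx.2⟩)) hint
  have hlog := (hf (-ω) ⟨le_rfl, by linarith⟩).const_smul (Real.log ω)
  calc ∑' k : ℕ, (-ω) ^ k • ∑' j : ℕ, zpowPrimitive (j - k) a • c j
      = ∑' (k : ℕ) (j : ℕ), ((-ω) ^ k * zpowPrimitive (j - k) a) • c j := by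
        simp_rw [← tsum_const_smul'', smul_smul]
    _ = ∑' (j : ℕ) (k : ℕ), ((-ω) ^ k * zpowPrimitive (j - k) a) • c j :=
        hdouble.of_norm.tsum_comm.symm
    _ = ∑' j : ℕ, ((∫ x in (0 : ℝ)..a, x ^ j * (ω + x)⁻¹) • c j +
          Real.log ω • (-ω) ^ j • c j) := tsum_congr fun j => by
        rw [((hasSum_neg_pow_mul_zpowPrimitive hω ha j).smul_const (c j)).tsum_eq, add_smul,
          mul_comm, mul_smul]
    _ = _ := (hintegral.add hlog).tsum_eq

theorem stmt_9_general {ω : ℝ} (hω : 0 < ω) (ha : ω < a)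
    (hc : Summable fun j => ‖a ^ j • c j‖)
    (hf : ∀ x ∈ Icc (-ω) a, HasSum (fun j => x ^ j • c j) (f x)) :
    ∃ fp : ℕ → E, (∀ k, HasFinitePart_s9 f c k a (fp k)) ∧
      Summable (fun k => ‖(-ω) ^ k • fp k‖) ∧
      ∫ x in (0 : ℝ)..a, (ω + x)⁻¹ • f x = (∑' k, (-ω) ^ k • fp k) - Real.log ω • f (-ω) := by
  have hf_pos : ∀ x ∈ Ioc 0 a, HasSum (fun j => x ^ j • c j) (f x) :=
    fun x hx => hf x ⟨by linarith [hx.1], hx.2⟩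
  exact ⟨fun k => ∑' j : ℕ, zpowPrimitive (j - k) a • c j,
    hasFinitePart_tsum_zpowPrimitive_smul (hω.trans ha) hc hf_pos,
    summable_norm_pow_smul_tsum_zpowPrimitive_smul hc (by rwa [abs_neg, abs_of_pos hω]),
    eq_sub_of_add_eq (tsum_neg_pow_smul_tsum_zpowPrimitive_smul hω ha hc hf).symm⟩

end PowerSeries

theorem hasSum_pow_smul_of_entire_extension {f : ℝ → ℝ} {F : ℂ → ℂ} {c : ℕ → ℝ}
    (hF : Differentiable ℂ F) (hFf : ∀ x : ℝ, F x = f x)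
    (hc : ∀ j, (c j : ℂ) = iteratedDeriv j F 0 / (Nat.factorial j)) (x : ℝ) :
    HasSum (fun j => x ^ j • c j) (f x) := by
  have htaylor := Complex.hasSum_taylorSeries_of_entire hF 0 (x : ℂ)
  have hterm : ∀ j, ((x ^ j • c j : ℝ) : ℂ) =
      (j.factorial : ℂ)⁻¹ • ((x : ℂ) - 0) ^ j • iteratedDeriv j F 0 := fun j => by
    push_cast [smul_eq_mul]
    rw [hc, sub_zero]
    ring
  rw [hFf, ← funext hterm] at htaylor
  exact Complex.hasSum_ofReal.mp htaylor

/-- Finite-part integration of the incomplete Stieltjes transform of order 1: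
`∫_0^a f(x)/(ω+x) dx = Σ_{k=0}^∞ (-ω)^k ⨍_0^a f(x)/x^{k+1} dx − f(-ω) ln ω`,
the series converging absolutely. -/
theorem stmt_9 (f : ℝ → ℝ) (F : ℂ → ℂ) (c : ℕ → ℝ)
    (hF : Differentiable ℂ F) (hFf : ∀ x : ℝ, F x = f x)
    (hc : ∀ j, (c j : ℂ) = iteratedDeriv j F 0 / (Nat.factorial j))
    (ω a : ℝ) (hω : 0 < ω) (ha : ω < a) :
    ∃ fp : ℕ → ℝ,
      (∀ k : ℕ,
        Tendsto
          (fun ε : ℝ =>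
            (∫ x in ε..a, f x / x ^ (k + 1)) -
              ((∑ j ∈ Finset.range k,
                  c j / (((k - j : ℕ) : ℝ) * ε ^ (k - j))) -
                c k * Real.log ε))
          (nhdsWithin 0 (Set.Ioi 0)) (nhds (fp k))) ∧
      Summable (fun k : ℕ => |(-ω) ^ k * fp k|) ∧
      (∫ x in (0 : ℝ)..a, f x / (ω + x)) =
        (∑' k : ℕ, (-ω) ^ k * fp k) - f (-ω) * Real.log ω := by
  have hf := hasSum_pow_smul_of_entire_extension hF hFf hc
  simpa only [HasFinitePart_s9, smul_eq_mul, ← div_eq_inv_mul, mul_comm (Real.log _),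
    Real.norm_eq_abs] using stmt_9_general hω ha (hf a).summable.norm fun x _ => hf x
end

section
/- Let f : ℝ → ℝ admit an entire complex extension F with Taylor coefficients c_j = f^{(j)}(0)/j!, let n ≥ 2 be an integer and 0 < ω < a. Then the series Σ_{k=0}^{∞} binom(-n, k) ω^k ⨍_0^a f(x)/x^{k+n} dx converges absolutely and ∫_0^a f(x)/(ω + x)^n dx = Σ_{k=0}^{∞} binom(-n, k) ω^k ⨍_0^a f(x)/x^{k+n} dx − (F^{(n-1)}(-ω)/(n-1)!) ln ω + Σ_{k=0}^{n-2} F^{(k)}(-ω)/(k! (n-1-k) ω^{n-k-1}), where F^{(k)}(-ω) is the k-th derivative of the entire extension at -ω. -/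
open Filter MeasureTheory Set

/-!
The finite part of `∫_0^a x^s dx` is the antiderivative of `x^s` without constant term, taken at
`a`. For `f(x) = x^j` the identity is proved by induction on `j`: the relation
`x^(j+1)/(ω+x)^(n+1) = x^j/(ω+x)^n - ω x^j/(ω+x)^(n+1)` becomes Pascal's rule both for
`binom(-n, k)` and for the expansion of `x^j` at the pole `-ω`. For `j = 0` the geometric or
logarithmic series in `-ω/a` sums the finite parts to the antiderivative of `(ω+x)^(-n)` at `x = a`,
so its value at `x = 0` is left over as the pole term. Since `ω < a`, the double series over `j` and
`k` converges absolutely, and summing over the Taylor series of `f` turns the pole terms into the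
derivatives of `F` at `-ω`.
-/

section FinitePart

/-- The Hadamard finite part at `0` of `∫_0^a x^s dx`. It is the antiderivative of `x^s` at `a`
normalised to have no constant term, and is also used for its values at points other than `a`. -/
noncomputable def zpowFinitePart (a : ℝ) (s : ℤ) : ℝ :=
  if s = -1 then Real.log a else a ^ (s + 1) / (s + 1)

theorem zpowFinitePart_neg_one (a : ℝ) : zpowFinitePart a (-1) = Real.log a :=
  if_pos rfl

theorem zpowFinitePart_natCast (a : ℝ) (j : ℕ) : zpowFinitePart a j = a ^ (j + 1) / (j + 1) := by
  rw [zpowFinitePart, if_neg (by lia)]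
  norm_cast

theorem zpowFinitePart_neg_natCast_add_two (a : ℝ) (m : ℕ) :
    zpowFinitePart a (-(m + 2 : ℕ)) = -((m + 1 : ℝ) * a ^ (m + 1))⁻¹ := by
  rw [zpowFinitePart, if_neg (by lia), show -((m + 2 : ℕ) : ℤ) + 1 = -(m + 1 : ℕ) by lia,
    zpow_neg, zpow_natCast]
  push_cast
  rw [show -((m : ℝ) + 2) + 1 = -(m + 1) by ring, div_neg, div_eq_mul_inv, ← mul_inv_rev]

theorem integral_zpow_eq_zpowFinitePart_sub {x y : ℝ} (hx : 0 < x) (hy : 0 < y) (s : ℤ) :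
    ∫ t in x..y, t ^ s = zpowFinitePart y s - zpowFinitePart x s := by
  unfold zpowFinitePart
  split_ifs with h
  · simp only [h, zpow_neg_one]
    rw [integral_inv_of_pos hx hy, Real.log_div hy.ne' hx.ne']
  · rw [integral_zpow (Or.inr ⟨h, notMem_uIcc_of_lt hx hy⟩), sub_div]

theorem abs_zpowFinitePart_le {a : ℝ} (ha : 0 < a) (s : ℤ) :
    |zpowFinitePart a s| ≤ a ^ (s + 1) * (1 + |Real.log a|) := by
  unfold zpowFinitePart
  split_ifs with h
  · simp [h]
  · have one_le_abs : (1 : ℝ) ≤ |(s : ℝ) + 1| := by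
      exact_mod_cast Int.one_le_abs (show s + 1 ≠ 0 by lia)
    have zpow_pos : 0 < a ^ (s + 1) := zpow_pos ha _
    rw [abs_div, abs_of_pos zpow_pos]
    calc a ^ (s + 1) / |(s : ℝ) + 1| ≤ a ^ (s + 1) := div_le_self zpow_pos.le one_le_abs
      _ ≤ a ^ (s + 1) * (1 + |Real.log a|) :=
        le_mul_of_one_le_right zpow_pos.le (by linarith [abs_nonneg (Real.log a)])

theorem sum_zpowFinitePart_smul {E : Type*} [AddCommGroup E] [Module ℝ E] (d : ℕ → E) (x : ℝ)
    (m : ℕ) :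
    ∑ j ∈ Finset.range (m + 1), zpowFinitePart x (j - (m + 1 : ℕ)) • d j =
      Real.log x • d m -
        ∑ j ∈ Finset.range m, (((m - j : ℕ) : ℝ) * x ^ (m - j))⁻¹ • d j := by
  rw [Finset.sum_range_succ, show (m : ℤ) - (m + 1 : ℕ) = -1 by lia, zpowFinitePart_neg_one,
    add_comm, sub_eq_add_neg, ← Finset.sum_neg_distrib]
  congr 1
  refine Finset.sum_congr rfl fun j hj => ?_
  obtain ⟨i, rfl⟩ := Nat.exists_eq_add_of_lt (Finset.mem_range.1 hj)
  rw [show (j : ℤ) - (j + i + 1 + 1 : ℕ) = -(i + 2 : ℕ) by lia,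
    zpowFinitePart_neg_natCast_add_two, show j + i + 1 - j = i + 1 by lia, Nat.cast_succ, neg_smul]

end FinitePart

section Monomial

theorem hasSum_multichoose_mul_geometric {𝕜 : Type*} [NormedField 𝕜] [CompleteSpace 𝕜] {r : 𝕜}
    (hr : ‖r‖ < 1) (n : ℕ) :
    HasSum (fun k => (n.multichoose k : 𝕜) * r ^ k) ((1 - r) ^ n)⁻¹ := by
  cases n with
  | zero =>
    have tail_zero : ∀ k ≠ 0, (Nat.multichoose 0 k : 𝕜) * r ^ k = 0 := fun k hk => by
      obtain ⟨k, rfl⟩ := Nat.exists_eq_succ_of_ne_zero hk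
      simp
    simpa using hasSum_single 0 tail_zero
  | succ n =>
    rw [← one_div]
    convert! hasSum_choose_mul_geometric_of_norm_lt_one n hr using 4 with k
    rw [Nat.multichoose_eq, show n + 1 + k - 1 = k + n by lia, Nat.choose_symm_add]

theorem succ_mul_multichoose (n k : ℕ) :
    (n + 1) * (n + 2).multichoose k = (k + n + 1) * (n + 1).multichoose k := by
  have := Nat.choose_mul_succ_eq (n + k) k
  rw [show n + k + 1 - k = n + 1 by lia] at this
  rw [Nat.multichoose_eq, Nat.multichoose_eq, show n + 2 + k - 1 = n + k + 1 by lia,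
    show n + 1 + k - 1 = n + k by lia]
  linarith

theorem hasSum_multichoose_mul_zpowFinitePart_neg {ω a : ℝ} (ha : |ω| < a) (n : ℕ) :
    HasSum (fun k : ℕ => (-ω) ^ k * (n + 1).multichoose k * zpowFinitePart a (-(k + (n + 1) : ℕ)))
      (zpowFinitePart (ω + a) (-(n + 1 : ℕ))) := by
  have ha0 : 0 < a := (abs_nonneg ω).trans_lt ha
  have hωa : 0 < ω + a := by linarith [neg_abs_le ω]
  have hr : |-ω / a| < 1 := by rwa [abs_div, abs_neg, abs_of_pos ha0, div_lt_one ha0]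
  have one_sub_ratio : 1 - -ω / a = (ω + a) / a := by field_simp; ring
  cases n with
  | zero =>
    rw [← hasSum_nat_add_iff' 1]
    convert! (Real.hasSum_pow_div_log_of_abs_lt_one hr).neg using 1
    · ext k
      rw [show k + 1 + (0 + 1) = k + 2 by lia, zpowFinitePart_neg_natCast_add_two,
        Nat.multichoose_one, div_pow, Nat.cast_one]
      field_simp
    · rw [one_sub_ratio, Real.log_div hωa.ne' ha0.ne']
      simp [zpowFinitePart_neg_one]
  | succ n =>
    convert! (hasSum_multichoose_mul_geometric hr (n + 1)).mul_left
      (-((n + 1 : ℝ) * a ^ (n + 1))⁻¹) using 1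
    · ext k
      have := congrArg (Nat.cast (R := ℝ)) (succ_mul_multichoose n k)
      push_cast at this
      rw [show k + (n + 1 + 1) = k + n + 2 by lia, zpowFinitePart_neg_natCast_add_two, div_pow,
        show k + n + 1 = k + (n + 1) by lia, pow_add a]
      push_cast
      field_simp
      linear_combination -(-ω) ^ k * this
    · rw [zpowFinitePart_neg_natCast_add_two, one_sub_ratio, div_pow]
      field_simp

theorem integral_inv_add_pow {ω a : ℝ} (hω : 0 < ω) (ha : 0 < a) (n : ℕ) :
    ∫ x in (0 : ℝ)..a, ((ω + x) ^ n)⁻¹ =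
      zpowFinitePart (ω + a) (-n) - zpowFinitePart ω (-n) := by
  rw [← integral_zpow_eq_zpowFinitePart_sub hω (add_pos hω ha)]
  simpa using
    intervalIntegral.integral_comp_add_left (fun x : ℝ => x ^ (-n : ℤ)) ω (a := 0) (b := a)

theorem integral_inv_add_pow_mul_pow_succ {ω a : ℝ} (hω : 0 < ω) (ha : 0 < a) (j n : ℕ) :
    ∫ x in (0 : ℝ)..a, ((ω + x) ^ (n + 1))⁻¹ * x ^ (j + 1) =
      (∫ x in (0 : ℝ)..a, ((ω + x) ^ n)⁻¹ * x ^ j) -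
        ω * ∫ x in (0 : ℝ)..a, ((ω + x) ^ (n + 1))⁻¹ * x ^ j := by
  have add_ne_zero : ∀ x ∈ uIcc 0 a, ω + x ≠ 0 := fun x hx => by
    rw [uIcc_of_le ha.le] at hx
    linarith [hx.1]
  have integrable (m : ℕ) :
      IntervalIntegrable (fun x : ℝ => ((ω + x) ^ m)⁻¹ * x ^ j) volume 0 a :=
    ContinuousOn.intervalIntegrable <| (ContinuousOn.inv₀ (by fun_prop) fun x hx =>
      pow_ne_zero _ (add_ne_zero x hx)).mul (by fun_prop)
  rw [← intervalIntegral.integral_const_mul, ← intervalIntegral.integral_sub (integrable n)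
    ((integrable (n + 1)).const_mul ω)]
  refine intervalIntegral.integral_congr fun x hx => ?_
  have := add_ne_zero x hx
  field_simp
  ring

/-- The finite part at `x = -ω` of the integral over `(-ω, 0)` of the principal part of
`x^j/(ω+x)^n` at its pole `-ω`, obtained by expanding `x^j` in powers of `ω + x`. -/
noncomputable def powPolePart (ω : ℝ) (j n : ℕ) : ℝ :=
  ∑ i ∈ Finset.range n, zpowFinitePart ω (i - n) * (j.choose i * (-ω) ^ (j - i))

theorem choose_succ_mul_pow {R : Type*} [CommSemiring R] (z : R) (j i : ℕ) :
    ((j + 1).choose (i + 1) : R) * z ^ (j + 1 - (i + 1)) =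
      j.choose i * z ^ (j - i) + z * (j.choose (i + 1) * z ^ (j - (i + 1))) := by
  rw [Nat.choose_succ_succ, Nat.add_sub_add_right]
  rcases lt_or_ge i j with hij | hji
  · rw [show j - i = j - (i + 1) + 1 by lia]
    push_cast
    ring
  · simp [Nat.choose_eq_zero_of_lt (show j < i + 1 by lia)]

theorem powPolePart_succ_succ (ω : ℝ) (j n : ℕ) :
    powPolePart ω (j + 1) (n + 1) = powPolePart ω j n - ω * powPolePart ω j (n + 1) := by
  have shift (i : ℕ) : ((i + 1 : ℕ) : ℤ) - (n + 1 : ℕ) = i - n := by lia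
  simp only [powPolePart, Finset.sum_range_succ' _ n, choose_succ_mul_pow, shift, mul_add,
    Finset.sum_add_distrib, Finset.mul_sum, Nat.choose_zero_right, Nat.cast_one, Nat.sub_zero,
    pow_succ']
  rw [← sub_sub, ← Finset.sum_sub_distrib, ← Finset.sum_add_distrib, sub_eq_add_neg]
  congr 1
  · exact Finset.sum_congr rfl fun i _ => by ring
  · ring

theorem powPolePart_zero_succ (ω : ℝ) (n : ℕ) :
    powPolePart ω 0 (n + 1) = zpowFinitePart ω (-(n + 1 : ℕ)) := by
  simp [powPolePart, Finset.sum_range_succ']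

theorem hasSum_multichoose_mul_zpowFinitePart_order_zero (ω a : ℝ) (j : ℕ) :
    HasSum (fun k : ℕ => (-ω) ^ k * Nat.multichoose 0 k * zpowFinitePart a (j - (k + 0 : ℕ)))
      ((∫ x in (0 : ℝ)..a, ((ω + x) ^ 0)⁻¹ * x ^ j) + powPolePart ω j 0) := by
  have tail_zero : ∀ k ≠ 0,
      (-ω) ^ k * Nat.multichoose 0 k * zpowFinitePart a (j - (k + 0 : ℕ)) = 0 := fun k hk => by
    obtain ⟨k, rfl⟩ := Nat.exists_eq_succ_of_ne_zero hk
    simp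
  simpa [powPolePart, zpowFinitePart_natCast] using hasSum_single 0 tail_zero

theorem hasSum_multichoose_mul_zpowFinitePart {ω a : ℝ} (hω : 0 < ω) (ha : ω < a) (j n : ℕ) :
    HasSum (fun k : ℕ => (-ω) ^ k * n.multichoose k * zpowFinitePart a (j - (k + n : ℕ)))
      ((∫ x in (0 : ℝ)..a, ((ω + x) ^ n)⁻¹ * x ^ j) + powPolePart ω j n) := by
  have ha0 : 0 < a := hω.trans ha
  induction j generalizing n with
  | zero =>
    cases n with
    | zero => exact hasSum_multichoose_mul_zpowFinitePart_order_zero ω a 0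
    | succ n =>
      simp only [pow_zero, mul_one, Nat.cast_zero, zero_sub]
      rw [integral_inv_add_pow hω ha0, powPolePart_zero_succ, sub_add_cancel]
      exact hasSum_multichoose_mul_zpowFinitePart_neg (by rwa [abs_of_pos hω]) n
  | succ j ih =>
    cases n with
    | zero => exact hasSum_multichoose_mul_zpowFinitePart_order_zero ω a (j + 1)
    | succ n =>
      rw [← hasSum_nat_add_iff' 1]
      convert! ((hasSum_nat_add_iff' 1).2 (ih n)).sub ((ih (n + 1)).mul_left ω) using 1
      · ext k
        rw [Nat.multichoose_succ_succ,
          show ((j + 1 : ℕ) : ℤ) - (k + 1 + (n + 1) : ℕ) = j - (k + 1 + n : ℕ) by lia,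
          show (j : ℤ) - (k + (n + 1) : ℕ) = j - (k + 1 + n : ℕ) by lia]
        push_cast
        ring
      · rw [integral_inv_add_pow_mul_pow_succ hω ha0, powPolePart_succ_succ]
        simp only [Finset.sum_range_one, pow_zero, Nat.multichoose_zero_right, one_mul,
          Nat.cast_zero, zero_add, Nat.cast_succ, add_sub_add_right_eq_sub]
        ring

end Monomial

section PowerSeries

variable {E : Type*} [NormedAddCommGroup E] {c : ℕ → E} {a : ℝ}

theorem summable_norm_add_mul_pow (ha : 0 < a) (hs : Summable fun j => ‖c j‖ * a ^ j) (m : ℕ) :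
    Summable fun j => ‖c (j + m)‖ * a ^ j :=
  (((summable_nat_add_iff m).2 hs).mul_right (a ^ m)⁻¹).congr fun j => by
    rw [pow_add]
    field_simp

theorem summable_norm_mul_pow_mono {b : ℝ} (hb : 0 ≤ b) (hba : b ≤ a)
    (hs : Summable fun j => ‖c j‖ * a ^ j) : Summable fun j => ‖c j‖ * b ^ j :=
  hs.of_nonneg_of_le (fun j => by positivity) fun j => by gcongr

variable [NormedSpace ℝ E] {f : ℝ → E}

/-- The finite part integral `⨍_0^a f(x)/x^m dx` of `f(x) = ∑ x^j c_j`, computed term by term;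
`tendsto_integral_add_sum_zpowFinitePart` relates it to the limit defining the finite part. -/
noncomputable def powerSeriesFinitePart (c : ℕ → E) (m : ℕ) (a : ℝ) : E :=
  ∑' j : ℕ, zpowFinitePart a (j - m) • c j

theorem hasSum_integral_mul_pow_smul [CompleteSpace E] {w : ℝ → ℝ} {e : ℝ} (he : 0 ≤ e)
    (hea : e ≤ a) (hs : Summable fun j => ‖c j‖ * a ^ j)
    (hf : ∀ x ∈ Icc e a, HasSum (fun j => x ^ j • c j) (f x)) (hw : ContinuousOn w (Icc e a)) :
    HasSum (fun j => (∫ x in e..a, w x * x ^ j) • c j) (∫ x in e..a, w x • f x) := by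
  obtain ⟨M, hM⟩ := isCompact_Icc.exists_bound_of_continuousOn hw
  have hsub : uIoc e a ⊆ Icc e a := uIoc_of_le hea ▸ Ioc_subset_Icc_self
  simp only [← intervalIntegral.integral_smul_const]
  refine intervalIntegral.hasSum_integral_of_dominated_convergence
    (fun j _ => M * (‖c j‖ * a ^ j)) (fun j => ?_) (fun j => .of_forall fun x hx => ?_)
    (.of_forall fun _ _ => hs.mul_left M) intervalIntegrable_const (.of_forall fun x hx => ?_)
  · have : ContinuousOn (fun x => (w x * x ^ j) • c j) (Icc e a) := by fun_prop
    exact (this.mono hsub).aestronglyMeasurable measurableSet_uIoc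
  · obtain ⟨hex, hxa⟩ := hsub hx
    have hx0 : 0 ≤ x := he.trans hex
    rw [norm_smul, norm_mul, norm_pow, Real.norm_of_nonneg hx0, mul_assoc, mul_comm (x ^ j)]
    gcongr
    · exact (norm_nonneg _).trans (hM x ⟨hex, hxa⟩)
    · exact hM x ⟨hex, hxa⟩
  · simpa only [smul_smul] using (hf x (hsub hx)).const_smul (w x)

theorem abs_zpowFinitePart_natCast_sub_le (ha : 0 < a) (j k n : ℕ) :
    |zpowFinitePart a (j - (k + n : ℕ))| ≤
      a ^ j * (a⁻¹ ^ k * (a / a ^ n * (1 + |Real.log a|))) := by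
  refine (abs_zpowFinitePart_le ha _).trans_eq ?_
  rw [zpow_add₀ ha.ne', zpow_sub₀ ha.ne', zpow_natCast, zpow_natCast, zpow_one, pow_add, inv_pow]
  field_simp

theorem summable_zpowFinitePart_smul [CompleteSpace E] (ha : 0 < a)
    (hs : Summable fun j => ‖c j‖ * a ^ j) (m : ℕ) :
    Summable fun j : ℕ => zpowFinitePart a (j - m) • c j := by
  refine .of_norm_bounded (hs.mul_right (a / a ^ m * (1 + |Real.log a|))) fun j => ?_
  have hbound := abs_zpowFinitePart_natCast_sub_le ha j 0 m
  rw [zero_add, pow_zero, one_mul] at hbound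
  calc ‖zpowFinitePart a (j - m) • c j‖ = ‖c j‖ * |zpowFinitePart a (j - m)| := by
        rw [norm_smul, mul_comm, Real.norm_eq_abs]
    _ ≤ ‖c j‖ * (a ^ j * (a / a ^ m * (1 + |Real.log a|))) := by gcongr
    _ = ‖c j‖ * a ^ j * (a / a ^ m * (1 + |Real.log a|)) := (mul_assoc _ _ _).symm

theorem integral_add_sum_zpowFinitePart [CompleteSpace E] {ε : ℝ} (hε : 0 < ε) (hεa : ε ≤ a)
    (hs : Summable fun j => ‖c j‖ * a ^ j)
    (hf : ∀ x ∈ Icc ε a, HasSum (fun j => x ^ j • c j) (f x)) (m : ℕ) :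
    (∫ x in ε..a, (x ^ m)⁻¹ • f x) + ∑ j ∈ Finset.range m, zpowFinitePart ε (j - m) • c j =
      powerSeriesFinitePart c m a - powerSeriesFinitePart (fun j => c (j + m)) 0 ε := by
  have ha : 0 < a := hε.trans_le hεa
  have integral_term (j : ℕ) : ∫ x in ε..a, (x ^ m)⁻¹ * x ^ j =
      zpowFinitePart a (j - m) - zpowFinitePart ε (j - m) := by
    rw [← integral_zpow_eq_zpowFinitePart_sub hε ha]
    refine intervalIntegral.integral_congr fun x hx => ?_
    rw [uIcc_of_le hεa] at hx
    rw [zpow_sub₀ (hε.trans_le hx.1).ne', zpow_natCast, zpow_natCast, div_eq_inv_mul]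
  have at_ε := summable_zpowFinitePart_smul hε (summable_norm_mul_pow_mono hε.le hεa hs) m
  have integral_eq := hasSum_integral_mul_pow_smul hε.le hεa hs hf
    (w := fun x => (x ^ m)⁻¹) (ContinuousOn.inv₀ (by fun_prop) fun x hx =>
      pow_ne_zero _ (hε.trans_le hx.1).ne')
  simp only [integral_term, sub_smul] at integral_eq
  rw [integral_eq.unique ((summable_zpowFinitePart_smul ha hs m).hasSum.sub at_ε.hasSum),
    ← at_ε.sum_add_tsum_nat_add m]
  simp only [powerSeriesFinitePart, Nat.cast_add, add_sub_cancel_right, Nat.cast_zero, sub_zero]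
  abel

theorem tendsto_powerSeriesFinitePart_zero (ha : 0 < a)
    (hs : Summable fun j => ‖c j‖ * a ^ j) :
    Tendsto (powerSeriesFinitePart c 0) (nhdsWithin 0 (Ioi 0)) (nhds 0) := by
  have bound : ∀ ε ∈ Ioo 0 a, ‖powerSeriesFinitePart c 0 ε‖ ≤ ε * ∑' j, ‖c j‖ * a ^ j := by
    rintro ε ⟨hε, hεa⟩
    refine tsum_of_norm_bounded (hs.hasSum.mul_left ε) fun j => ?_
    rw [Nat.cast_zero, sub_zero, zpowFinitePart_natCast, norm_smul,
      Real.norm_of_nonneg (by positivity)]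
    calc ε ^ (j + 1) / (j + 1) * ‖c j‖ ≤ ε ^ (j + 1) * ‖c j‖ := by
          gcongr
          exact div_le_self (by positivity) (by linarith [j.cast_nonneg (α := ℝ)])
      _ = ε * (‖c j‖ * ε ^ j) := by ring
      _ ≤ ε * (‖c j‖ * a ^ j) := by gcongr
  refine squeeze_zero_norm' (eventually_of_mem (Ioo_mem_nhdsGT ha) bound) ?_
  refine Tendsto.mono_left ?_ nhdsWithin_le_nhds
  exact Continuous.tendsto' (by fun_prop) 0 0 (zero_mul _)

theorem tendsto_integral_add_sum_zpowFinitePart [CompleteSpace E] (ha : 0 < a)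
    (hs : Summable fun j => ‖c j‖ * a ^ j)
    (hf : ∀ x ∈ Ioc 0 a, HasSum (fun j => x ^ j • c j) (f x)) (m : ℕ) :
    Tendsto (fun ε => (∫ x in ε..a, (x ^ m)⁻¹ • f x) +
        ∑ j ∈ Finset.range m, zpowFinitePart ε (j - m) • c j)
      (nhdsWithin 0 (Ioi 0)) (nhds (powerSeriesFinitePart c m a)) := by
  have tail := tendsto_powerSeriesFinitePart_zero ha (summable_norm_add_mul_pow ha hs m)
  rw [← sub_zero (powerSeriesFinitePart c m a)]
  refine (tail.const_sub _).congr' (eventually_of_mem (Ioo_mem_nhdsGT ha) ?_)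
  rintro ε ⟨hε, hεa⟩
  exact (integral_add_sum_zpowFinitePart hε hεa.le hs
    (fun x hx => hf x ⟨hε.trans_le hx.1, hx.2⟩) m).symm

theorem hasSum_powPolePart_smul {ω : ℝ} {n : ℕ} {d : ℕ → E}
    (hd : ∀ i, HasSum (fun j => (j.choose i * (-ω) ^ (j - i)) • c j) (d i)) :
    HasSum (fun j => powPolePart ω j n • c j)
      (∑ i ∈ Finset.range n, zpowFinitePart ω (i - n) • d i) := by
  refine (hasSum_sum fun i _ => (hd i).const_smul (zpowFinitePart ω (i - n))).congr_fun fun j => ?_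
  simp only [powPolePart, Finset.sum_smul, mul_smul]

theorem summable_multichoose_mul_zpowFinitePart_smul [CompleteSpace E] {ω : ℝ} (ha : |ω| < a)
    (hs : Summable fun j => ‖c j‖ * a ^ j) (n : ℕ) :
    Summable fun p : ℕ × ℕ =>
      ((-ω) ^ p.2 * n.multichoose p.2 * zpowFinitePart a (p.1 - (p.2 + n : ℕ))) • c p.1 := by
  have ha0 : 0 < a := (abs_nonneg ω).trans_lt ha
  have hr : ‖|ω| / a‖ < 1 := by
    rwa [norm_div, Real.norm_of_nonneg ha0.le, Real.norm_eq_abs, abs_abs, div_lt_one ha0]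
  refine .of_norm_bounded (hs.mul_of_nonneg
    ((hasSum_multichoose_mul_geometric hr n).summable.mul_right (a / a ^ n * (1 + |Real.log a|)))
    (fun j => by positivity) (fun k => by positivity)) fun ⟨j, k⟩ => ?_
  calc ‖((-ω) ^ k * n.multichoose k * zpowFinitePart a (j - (k + n : ℕ))) • c j‖
      = |ω| ^ k * n.multichoose k * |zpowFinitePart a (j - (k + n : ℕ))| * ‖c j‖ := by
        simp [norm_smul]
    _ ≤ |ω| ^ k * n.multichoose k *
          (a ^ j * (a⁻¹ ^ k * (a / a ^ n * (1 + |Real.log a|)))) * ‖c j‖ := by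
        gcongr
        exact abs_zpowFinitePart_natCast_sub_le ha0 j k n
    _ = ‖c j‖ * a ^ j *
          (n.multichoose k * (|ω| / a) ^ k * (a / a ^ n * (1 + |Real.log a|))) := by
        ring

theorem hasSum_powerSeriesFinitePart [CompleteSpace E] {ω : ℝ} (hω : 0 < ω) (ha : ω < a)
    (hs : Summable fun j => ‖c j‖ * a ^ j)
    (hf : ∀ x ∈ Icc 0 a, HasSum (fun j => x ^ j • c j) (f x)) (n : ℕ) {d : ℕ → E}
    (hd : ∀ i, HasSum (fun j => (j.choose i * (-ω) ^ (j - i)) • c j) (d i)) :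
    HasSum (fun k => ((-ω) ^ k * n.multichoose k) • powerSeriesFinitePart c (k + n) a)
      ((∫ x in (0 : ℝ)..a, ((ω + x) ^ n)⁻¹ • f x) +
        ∑ i ∈ Finset.range n, zpowFinitePart ω (i - n) • d i) := by
  have ha0 : 0 < a := hω.trans ha
  have double := (summable_multichoose_mul_zpowFinitePart_smul (by rwa [abs_of_pos hω]) hs n).hasSum
  have by_power := double.prod_fiberwise fun j =>
    (hasSum_multichoose_mul_zpowFinitePart hω ha j n).smul_const (c j)
  have integral_eq := hasSum_integral_mul_pow_smul le_rfl ha0.le hs hf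
    (w := fun x => ((ω + x) ^ n)⁻¹)
    (ContinuousOn.inv₀ (by fun_prop) fun x hx => pow_ne_zero _ (by linarith [hx.1]))
  simp only [add_smul] at by_power
  rw [← by_power.unique (integral_eq.add (hasSum_powPolePart_smul hd))]
  refine ((Equiv.prodComm ℕ ℕ).hasSum_iff.2 double).prod_fiberwise fun k => ?_
  simp only [Function.comp_apply, Equiv.prodComm_apply, Prod.swap_prod_mk, mul_smul _ _ (c _)]
  exact (summable_zpowFinitePart_smul ha0 hs (k + n)).hasSum.const_smul _

end PowerSeries

section Taylor

theorem hasSum_choose_mul_pow_smul_iteratedDeriv {E : Type*} [NormedAddCommGroup E]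
    [NormedSpace ℂ E] [CompleteSpace E] {F : ℂ → E} {z₀ z : ℂ} {R : ℝ}
    (hF : DifferentiableOn ℂ F (Metric.ball z₀ R)) (hz : z ∈ Metric.ball z₀ R) (k : ℕ) :
    HasSum
      (fun j => ((j.choose k : ℂ) * (z - z₀) ^ (j - k)) •
        (j.factorial : ℂ)⁻¹ • iteratedDeriv j F z₀)
      ((k.factorial : ℂ)⁻¹ • iteratedDeriv k F z) := by
  have hFk : DifferentiableOn ℂ (iteratedDeriv k F) (Metric.ball z₀ R) := by
    rw [iteratedDeriv_eq_iterate]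
    exact ((hF.analyticOnNhd Metric.isOpen_ball).iterated_deriv k).differentiableOn
  have taylor := (Complex.hasSum_taylorSeries_on_ball hFk hz).const_smul (k.factorial : ℂ)⁻¹
  rw [← hasSum_nat_add_iff' k, Finset.sum_eq_zero fun j hj => by
    simp [Nat.choose_eq_zero_of_lt (Finset.mem_range.1 hj)], sub_zero]
  refine taylor.congr_fun fun i => ?_
  have iteratedDeriv_add : iteratedDeriv i (iteratedDeriv k F) z₀ = iteratedDeriv (i + k) F z₀ := by
    simp only [iteratedDeriv_eq_iterate, Function.iterate_add_apply]
  have factorial_add : ((i + k).choose k : ℂ) * ((i + k).factorial : ℂ)⁻¹ =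
      (k.factorial : ℂ)⁻¹ * (i.factorial : ℂ)⁻¹ := by
    have choose_mul := Nat.add_choose_mul_factorial_mul_factorial i k
    have := i.factorial_ne_zero
    have := k.factorial_ne_zero
    have := (i + k).factorial_ne_zero
    field_simp
    rw [mul_right_comm]
    exact_mod_cast choose_mul
  rw [iteratedDeriv_add, Nat.add_sub_cancel, smul_smul, smul_smul, smul_smul, mul_right_comm,
    factorial_add]

end Taylor

section Real

variable {f : ℝ → ℝ} {c : ℕ → ℝ} {a : ℝ}

theorem tendsto_integral_div_pow_sub_divergentPart (ha : 0 < a)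
    (hs : Summable fun j => ‖c j‖ * a ^ j)
    (hf : ∀ x ∈ Ioc 0 a, HasSum (fun j => x ^ j * c j) (f x)) (m : ℕ) :
    Tendsto
      (fun ε : ℝ => (∫ x in ε..a, f x / x ^ (m + 1)) -
        ((∑ j ∈ Finset.range m, c j / (((m - j : ℕ) : ℝ) * ε ^ (m - j))) - c m * Real.log ε))
      (nhdsWithin 0 (Ioi 0)) (nhds (powerSeriesFinitePart c (m + 1) a)) := by
  refine (tendsto_integral_add_sum_zpowFinitePart ha hs hf (m + 1)).congr fun ε => ?_
  rw [sum_zpowFinitePart_smul, sub_sub_eq_add_sub, ← add_sub_assoc]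
  simp only [smul_eq_mul, ← div_eq_inv_mul, mul_comm (c m)]

theorem hasSum_ofReal_choose_mul_pow_mul {F : ℂ → ℂ} {R t : ℝ}
    (hF : DifferentiableOn ℂ F (Metric.ball 0 R))
    (hc : ∀ j, (c j : ℂ) = iteratedDeriv j F 0 / (Nat.factorial j)) (ht : |t| < R) (k : ℕ) :
    HasSum (fun j => ((j.choose k * t ^ (j - k) * c j : ℝ) : ℂ))
      (iteratedDeriv k F t / (Nat.factorial k)) := by
  have ht' : (t : ℂ) ∈ Metric.ball 0 R := by simpa using ht
  simpa [hc, div_eq_inv_mul] using hasSum_choose_mul_pow_smul_iteratedDeriv hF ht' k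

theorem hasSum_pow_mul_of_differentiableOn {F : ℂ → ℂ} {R x y : ℝ}
    (hF : DifferentiableOn ℂ F (Metric.ball 0 R))
    (hc : ∀ j, (c j : ℂ) = iteratedDeriv j F 0 / (Nat.factorial j)) (hx : |x| < R)
    (hy : F x = y) : HasSum (fun j => x ^ j * c j) y := by
  rw [← Complex.hasSum_ofReal, ← hy]
  simpa using hasSum_ofReal_choose_mul_pow_mul hF hc hx 0

theorem ofReal_sum_zpowFinitePart_mul {d : ℕ → ℝ} {D : ℕ → ℂ}
    (hd : ∀ i, (d i : ℂ) = D i / (Nat.factorial i)) (ω : ℝ) (n : ℕ) :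
    ((∑ i ∈ Finset.range (n + 1), zpowFinitePart ω (i - (n + 1 : ℕ)) * d i : ℝ) : ℂ) =
      D n / (Nat.factorial n) * Real.log ω -
        ∑ k ∈ Finset.range n,
          D k / ((Nat.factorial k : ℂ) * ((n - k : ℕ) : ℂ) * (ω : ℂ) ^ (n - k)) := by
  simp only [← smul_eq_mul, sum_zpowFinitePart_smul]
  push_cast [smul_eq_mul, hd]
  rw [mul_comm (Complex.ofReal _)]
  refine congrArg _ (Finset.sum_congr rfl fun k _ => ?_)
  rw [← div_eq_inv_mul, div_div, mul_assoc]

end Real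

theorem stmt_10_general (f : ℝ → ℝ) (F : ℂ → ℂ) (c : ℕ → ℝ) (n : ℕ) (hn : 1 ≤ n)
    (ω a R : ℝ) (hω : 0 < ω) (ha : ω < a) (haR : a < R)
    (hF : DifferentiableOn ℂ F (Metric.ball 0 R)) (hFf : ∀ x ∈ Icc (0 : ℝ) a, F x = f x)
    (hc : ∀ j, (c j : ℂ) = iteratedDeriv j F 0 / (Nat.factorial j)) :
    ∃ fp : ℕ → ℝ,
      (∀ k : ℕ,
        Tendsto
          (fun ε : ℝ =>
            (∫ x in ε..a, f x / x ^ (k + n)) -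
              ((∑ j ∈ Finset.range (k + n - 1),
                  c j / (((k + n - 1 - j : ℕ) : ℝ) * ε ^ (k + n - 1 - j))) -
                c (k + n - 1) * Real.log ε))
          (nhdsWithin 0 (Set.Ioi 0)) (nhds (fp k))) ∧
      Summable (fun k : ℕ =>
        |(-1 : ℝ) ^ k * (Nat.choose (n + k - 1) k : ℝ) * ω ^ k * fp k|) ∧
      ((∫ x in (0 : ℝ)..a, f x / (ω + x) ^ n : ℝ) : ℂ) =
        ((∑' k : ℕ, (-1 : ℝ) ^ k * (Nat.choose (n + k - 1) k : ℝ) * ω ^ k * fp k : ℝ) : ℂ) -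
          (iteratedDeriv (n - 1) F (-(ω : ℂ)) / (Nat.factorial (n - 1) : ℂ)) *
            (Real.log ω : ℂ) +
          ∑ k ∈ Finset.range (n - 1),
            iteratedDeriv k F (-(ω : ℂ)) /
              ((Nat.factorial k : ℂ) * ((n - 1 - k : ℕ) : ℂ) * (ω : ℂ) ^ (n - k - 1)) := by
  obtain ⟨N, rfl⟩ := Nat.exists_eq_add_of_le' hn
  have ha0 : 0 < a := hω.trans ha
  have hf : ∀ x ∈ Icc 0 a, HasSum (fun j => x ^ j * c j) (f x) := fun x hx =>
    hasSum_pow_mul_of_differentiableOn hF hc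
      ((abs_of_nonneg hx.1).trans_lt (hx.2.trans_lt haR)) (hFf x hx)
  have hs : Summable fun j => ‖c j‖ * a ^ j :=
    (hf a (right_mem_Icc.2 ha0.le)).summable.norm.congr fun j => by
      rw [norm_mul, norm_pow, Real.norm_of_nonneg ha0.le, mul_comm]
  have taylor := hasSum_ofReal_choose_mul_pow_mul hF hc
    (t := -ω) (by rw [abs_neg, abs_of_pos hω]; exact ha.trans haR)
  have taylor_real (i : ℕ) := (Complex.summable_ofReal.1 (taylor i).summable).hasSum
  have taylor_eq (i : ℕ) := (Complex.hasSum_ofReal.2 (taylor_real i)).unique (taylor i)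
  have series : HasSum (fun k => (-1) ^ k * (Nat.choose (N + 1 + k - 1) k : ℝ) * ω ^ k *
      powerSeriesFinitePart c (k + (N + 1)) a) _ :=
    (hasSum_powerSeriesFinitePart hω ha hs hf (N + 1) taylor_real).congr_fun fun k => by
      rw [neg_pow ω, Nat.multichoose_eq, smul_eq_mul, mul_right_comm ((-1) ^ k)]
  refine ⟨fun k => powerSeriesFinitePart c (k + (N + 1)) a, fun k =>
    tendsto_integral_div_pow_sub_divergentPart ha0 hs (fun x hx => hf x (Ioc_subset_Icc_self hx))
      (k + N), series.summable.abs, ?_⟩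
  have ofReal_tsum := congrArg Complex.ofReal series.tsum_eq
  simp only [smul_eq_mul, Complex.ofReal_add, ofReal_sum_zpowFinitePart_mul taylor_eq,
    Complex.ofReal_neg, ← div_eq_inv_mul] at ofReal_tsum
  rw [ofReal_tsum]
  simp only [Nat.add_sub_cancel, Nat.sub_right_comm _ _ 1]
  ring

/-- Finite-part integration of the incomplete generalized Stieltjes transform of
order `n ≥ 2`: `∫_0^a f(x)/(ω+x)^n dx = Σ_k binom(-n,k) ω^k ⨍_0^a f/x^{k+n}
− (F^{(n-1)}(-ω)/(n-1)!) ln ω + Σ_{k=0}^{n-2} F^{(k)}(-ω)/(k!(n-1-k)ω^{n-k-1})`,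
the series converging absolutely. -/
theorem stmt_10 (f : ℝ → ℝ) (F : ℂ → ℂ) (c : ℕ → ℝ)
    (hF : Differentiable ℂ F) (hFf : ∀ x : ℝ, F x = f x)
    (hc : ∀ j, (c j : ℂ) = iteratedDeriv j F 0 / (Nat.factorial j))
    (n : ℕ) (hn : 2 ≤ n) (ω a : ℝ) (hω : 0 < ω) (ha : ω < a) :
    ∃ fp : ℕ → ℝ,
      (∀ k : ℕ,
        Tendsto
          (fun ε : ℝ =>
            (∫ x in ε..a, f x / x ^ (k + n)) -
              ((∑ j ∈ Finset.range (k + n - 1),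
                  c j / (((k + n - 1 - j : ℕ) : ℝ) * ε ^ (k + n - 1 - j))) -
                c (k + n - 1) * Real.log ε))
          (nhdsWithin 0 (Set.Ioi 0)) (nhds (fp k))) ∧
      Summable (fun k : ℕ =>
        |(-1 : ℝ) ^ k * (Nat.choose (n + k - 1) k : ℝ) * ω ^ k * fp k|) ∧
      ((∫ x in (0 : ℝ)..a, f x / (ω + x) ^ n : ℝ) : ℂ) =
        ((∑' k : ℕ, (-1 : ℝ) ^ k * (Nat.choose (n + k - 1) k : ℝ) * ω ^ k * fp k : ℝ) : ℂ) -
          (iteratedDeriv (n - 1) F (-(ω : ℂ)) / (Nat.factorial (n - 1) : ℂ)) *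
            (Real.log ω : ℂ) +
          ∑ k ∈ Finset.range (n - 1),
            iteratedDeriv k F (-(ω : ℂ)) /
              ((Nat.factorial k : ℂ) * ((n - 1 - k : ℕ) : ℂ) * (ω : ℂ) ^ (n - k - 1)) :=
  stmt_10_general f F c n (one_le_two.trans hn) ω a (a + 1) hω ha (lt_add_one a)
    hF.differentiableOn (fun x _ => hFf x) hc
end

section
/- Let f : ℝ → ℝ admit an entire complex extension F with Taylor coefficients c_j = f^{(j)}(0)/j!, let n ≥ 1 be an integer, 0 < ν < 1 and 0 < ω < a. Then ∫_0^a x^{-ν} f(x)/(ω + x)^n dx = Σ_{k=0}^{∞} binom(-n, k) ω^k ⨍_0^a f(x)/x^{n+k+ν} dx + (π/(sin(πν) ω^ν)) Σ_{k=0}^{n-1} F^{(n-1-k)}(-ω) (ν)_k/(k! (n-1-k)! ω^k), where (ν)_k = ν(ν+1)⋯(ν+k-1) is the Pochhammer symbol ((ν)_0 = 1) and the infinite series converges. -/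
open Filter MeasureTheory Set

/-!
Taylor coefficients at `-ω` are peeled off one at a time: write `F z = F (-ω) + (z + ω) * G z` and
induct on `n`. Dividing by `(z + ω) ^ (n + 1)`, the term with `G` is the case `n` of the expansion,
because by Pascal's rule the series of coefficients `binom (-n-1) k` telescopes to the one of
coefficients `binom (-n) k`. For the constant, `∫_0^a = ∫_0^∞ - ∫_a^∞`; on `(a, ∞)` the binomial
series in `ω / x` converges and integrates to exactly the finite parts, so the discrepancy is the
integral of `x ^ (-ν) / (ω + x) ^ (n + 1)` over `(0, ∞)`, a Beta integral. The case `n = 0` is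
termwise integration.
-/

open scoped Topology

section BinomialSeries

variable {E : Type*} [NormedAddCommGroup E] [NormedSpace ℝ E]

theorem ringChoose_neg_natCast (n k : ℕ) :
    Ring.choose (-(n : ℝ)) k = (-1) ^ k * (n + k - 1).choose k := by
  rw [Ring.choose_neg, Int.negOnePow_def, zpow_natCast, Units.smul_def]
  push_cast
  rcases Nat.eq_zero_or_pos (n + k) with h | h
  · obtain ⟨rfl, rfl⟩ := Nat.add_eq_zero_iff.1 h
    simp
  · rw [← Ring.choose_natCast, Nat.cast_pred h, Nat.cast_add]
    simp

theorem hasSum_choose_mul_pow (r : ℝ) {x : ℝ} (hx : |x| < 1) :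
    HasSum (fun k => Ring.choose r k * x ^ k) ((1 + x) ^ r) := by
  simpa [binomialSeries, FormalMultilinearSeries.coeff_ofScalars, mul_comm] using
    (Real.one_add_rpow_hasFPowerSeriesOnBall_zero (a := r)).hasSum (y := x)
      (by simpa [Metric.mem_eball, edist_dist] using hx)

theorem summable_abs_choose_mul_pow (r : ℝ) {x : ℝ} (hx : |x| < 1) :
    Summable fun k => |Ring.choose r k| * |x| ^ k := by
  simpa only [abs_mul, abs_pow] using (hasSum_choose_mul_pow r hx).summable.abs

/- This is `(1 + x) ^ (r - 1) * (1 + x) = (1 + x) ^ r`, with `ω` times the shift of the sequence `u`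
in place of `x`. -/
theorem hasSum_choose_sub_one_smul {r ω : ℝ} {u : ℕ → E} {T : E}
    (hu : Summable fun k => (Ring.choose (r - 1) k * ω ^ k) • u (k + 1))
    (hT : HasSum (fun k => (Ring.choose r k * ω ^ k) • u k) T) :
    HasSum (fun k => (Ring.choose (r - 1) k * ω ^ k) • (ω • u (k + 1) + u k)) T := by
  obtain ⟨S, hS⟩ := hu
  have hωS := hS.const_smul ω
  set shifted : ℕ → E :=
    fun k => k.casesOn 0 fun k => ω • (Ring.choose (r - 1) k * ω ^ k) • u (k + 1)
  have hshift : HasSum shifted (ω • S) := by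
    rw [← hasSum_nat_add_iff' 1]
    simpa [shifted] using hωS
  rw [← sub_add_cancel T (ω • S)]
  refine ((hT.sub hshift).add hωS).congr_fun fun k => ?_
  cases k with
  | zero => simp [shifted, add_comm]
  | succ k =>
    have pascal := Ring.choose_succ_succ (r - 1) k
    rw [sub_add_cancel] at pascal
    simp only [shifted]
    rw [pascal]
    module

theorem rpow_sub_one_mul_one_add_div_rpow {σ r ω x : ℝ} (hx : |ω| < x) :
    x ^ (σ - 1) * (1 + ω / x) ^ r = x ^ (σ - 1 - r) * (ω + x) ^ r := by
  have hx0 : 0 < x := (abs_nonneg ω).trans_lt hx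
  have : 0 ≤ ω + x := by linarith [neg_abs_le ω]
  rw [show 1 + ω / x = (ω + x) / x by field_simp; ring, Real.div_rpow this hx0.le,
    Real.rpow_sub hx0 (σ - 1)]
  ring

theorem hasSum_choose_mul_rpow {σ r ω x : ℝ} (hx : |ω| < x) :
    HasSum (fun k : ℕ => Ring.choose r k * ω ^ k * x ^ (σ - 1 - k))
      (x ^ (σ - 1 - r) * (ω + x) ^ r) := by
  have hx0 : 0 < x := (abs_nonneg ω).trans_lt hx
  have hωx : |ω / x| < 1 := by rwa [abs_div, abs_of_pos hx0, div_lt_one hx0]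
  rw [← rpow_sub_one_mul_one_add_div_rpow hx]
  refine ((hasSum_choose_mul_pow r hωx).mul_left (x ^ (σ - 1))).congr_fun fun k => ?_
  rw [Real.rpow_sub_natCast hx0.ne', div_pow]
  ring

theorem integral_Ioi_rpow_sub_one_sub_natCast {σ a : ℝ} (hσ : σ < 0) (ha : 0 < a) (k : ℕ) :
    ∫ x in Ioi a, x ^ (σ - 1 - k) = -(a ^ (σ - k) / (σ - k)) := by
  rw [integral_Ioi_rpow_of_lt (by linarith [Nat.cast_nonneg (α := ℝ) k]) ha,
    show σ - 1 - k + 1 = σ - k by ring, neg_div]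

theorem summable_integral_norm_choose_mul_rpow {σ r ω a : ℝ} (hσ : σ < 0) (hω : |ω| < a) :
    Summable fun k : ℕ => ∫ x in Ioi a, ‖Ring.choose r k * ω ^ k * x ^ (σ - 1 - k)‖ := by
  have ha : 0 < a := (abs_nonneg ω).trans_lt hω
  have hωa : |ω / a| < 1 := by rwa [abs_div, abs_of_pos ha, div_lt_one ha]
  have hnorm (k : ℕ) : ∫ x in Ioi a, ‖Ring.choose r k * ω ^ k * x ^ (σ - 1 - k)‖ =
      |Ring.choose r k| * |ω / a| ^ k * (a ^ σ / (k - σ)) := by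
    calc ∫ x in Ioi a, ‖Ring.choose r k * ω ^ k * x ^ (σ - 1 - k)‖
        = ∫ x in Ioi a, |Ring.choose r k| * |ω| ^ k * x ^ (σ - 1 - k) := by
          refine setIntegral_congr_fun measurableSet_Ioi fun x hx => ?_
          simp only [norm_mul, norm_pow, Real.norm_eq_abs]
          rw [abs_of_nonneg (Real.rpow_nonneg (ha.trans hx).le _)]
      _ = |Ring.choose r k| * |ω / a| ^ k * (a ^ σ / (k - σ)) := by
          rw [integral_const_mul, integral_Ioi_rpow_sub_one_sub_natCast hσ ha, ← div_neg, neg_sub,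
            Real.rpow_sub_natCast ha.ne', abs_div, abs_of_pos ha, div_pow]
          ring
  simp only [hnorm]
  refine ((summable_abs_choose_mul_pow r hωa).mul_right (a ^ σ / -σ)).of_nonneg_of_le
    (fun k => ?_) fun k => ?_
  · have : 0 < k - σ := by linarith [Nat.cast_nonneg (α := ℝ) k]
    positivity
  · have : 0 < -σ := by linarith
    gcongr
    linarith [Nat.cast_nonneg (α := ℝ) k]

theorem hasSum_integral_Ioi_rpow_mul_add_rpow {σ r ω a : ℝ} (hσ : σ < 0) (hω : |ω| < a) :
    HasSum (fun k : ℕ => Ring.choose r k * ω ^ k * (a ^ (σ - k) / (σ - k)))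
      (-∫ x in Ioi a, x ^ (σ - 1 - r) * (ω + x) ^ r) := by
  have ha : 0 < a := (abs_nonneg ω).trans_lt hω
  have hterm (k : ℕ) : IntegrableOn (fun x => Ring.choose r k * ω ^ k * x ^ (σ - 1 - k)) (Ioi a) :=
    (integrableOn_Ioi_rpow_of_lt (by linarith [Nat.cast_nonneg (α := ℝ) k]) ha).const_mul _
  have := hasSum_integral_of_summable_integral_norm hterm
    (summable_integral_norm_choose_mul_rpow hσ hω)
  rw [setIntegral_congr_fun measurableSet_Ioi fun x hx =>
    (hasSum_choose_mul_rpow (hω.trans hx)).tsum_eq] at this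
  simpa only [integral_const_mul, integral_Ioi_rpow_sub_one_sub_natCast hσ ha, mul_neg, neg_neg]
    using this.neg

end BinomialSeries

section FinitePart

variable {E : Type*} [NormedAddCommGroup E] [NormedSpace ℝ E]

/-- Hadamard's finite part of `∫ x in 0..a, x ^ (σ - 1) • f x` for `f x = ∑' j, x ^ j • c j`,
encoded through the coefficients: each `x ^ (j + σ - 1)` contributes `a ^ (j + σ) / (j + σ)`, also
when it is not integrable at `0`. It is meaningful unless `j + σ = 0` for some `j`; the link with
the regularised limit is `tendsto_integral_add_sum_finitePart`. -/
noncomputable def finitePart (a σ : ℝ) (c : ℕ → E) : E :=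
  ∑' j : ℕ, (a ^ (j + σ) / (j + σ)) • c j

variable {c : ℕ → E} {a x σ : ℝ}

theorem abs_sub_round_le_abs_natCast_add (σ : ℝ) (j : ℕ) : |σ - round σ| ≤ |j + σ| := by
  simpa [add_comm] using round_le σ (-j)

theorem natCast_add_ne_zero (hσ : σ ≠ round σ) (j : ℕ) : j + σ ≠ 0 :=
  abs_pos.1 <| (abs_pos.2 (sub_ne_zero.2 hσ)).trans_le (abs_sub_round_le_abs_natCast_add σ j)

theorem norm_rpow_div_smul_le (hσ : σ ≠ round σ) (hx : 0 < x) (hxa : x ≤ a) (j : ℕ) :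
    ‖(x ^ (j + σ) / (j + σ)) • c j‖ ≤ ‖c j‖ * a ^ j * (x ^ σ / |σ - round σ|) := by
  have : 0 < |σ - round σ| := abs_pos.2 (sub_ne_zero.2 hσ)
  have ha : 0 < a := hx.trans_le hxa
  rw [norm_smul, norm_div, add_comm (j : ℝ), Real.rpow_add_natCast hx.ne', norm_mul, norm_pow,
    Real.norm_of_nonneg hx.le, Real.norm_of_nonneg (Real.rpow_nonneg hx.le σ), Real.norm_eq_abs]
  calc x ^ σ * x ^ j / |σ + j| * ‖c j‖ = ‖c j‖ * x ^ j * (x ^ σ / |σ + j|) := by ring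
    _ ≤ ‖c j‖ * a ^ j * (x ^ σ / |σ - round σ|) := by
      have hle : |σ - round σ| ≤ |σ + j| := by
        simpa only [add_comm σ] using abs_sub_round_le_abs_natCast_add σ j
      gcongr ?_ * ?_ * (_ / ?_)
      gcongr

theorem norm_finitePart_le (hσ : σ ≠ round σ) (hc : Summable fun j => ‖c j‖ * a ^ j) (hx : 0 < x)
    (hxa : x ≤ a) :
    ‖finitePart x σ c‖ ≤ (∑' j, ‖c j‖ * a ^ j) * (x ^ σ / |σ - round σ|) :=
  tsum_of_norm_bounded (hc.hasSum.mul_right _) (norm_rpow_div_smul_le hσ hx hxa)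

theorem tendsto_finitePart_nhdsGT_zero (hσ : σ ≠ round σ) (hσ0 : 0 < σ) (ha : 0 < a)
    (hc : Summable fun j => ‖c j‖ * a ^ j) :
    Tendsto (fun ε => finitePart ε σ c) (𝓝[>] 0) (𝓝 0) := by
  refine squeeze_zero_norm' (a := fun ε => (∑' j, ‖c j‖ * a ^ j) * (ε ^ σ / |σ - round σ|)) ?_ ?_
  · filter_upwards [Ioc_mem_nhdsGT ha] with ε hε
    exact norm_finitePart_le hσ hc hε.1 hε.2
  · have hrpow : Tendsto (fun ε : ℝ => ε ^ σ) (𝓝[>] 0) (𝓝 0) := by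
      simpa [Real.zero_rpow hσ0.ne'] using
        (Real.continuousAt_rpow_const 0 σ (.inr hσ0.le)).tendsto.mono_left nhdsWithin_le_nhds
    simpa using (hrpow.div_const _).const_mul _

variable [CompleteSpace E]

theorem summable_choose_smul_finitePart {r ω : ℝ} (hσ : σ ≠ round σ)
    (hc : Summable fun j => ‖c j‖ * a ^ j) (hω : |ω| < a) :
    Summable fun k : ℕ => (Ring.choose r k * ω ^ k) • finitePart a (σ - k) c := by
  have ha : 0 < a := (abs_nonneg ω).trans_lt hω
  have hωa : |ω / a| < 1 := by rwa [abs_div, abs_of_pos ha, div_lt_one ha]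
  refine ((summable_abs_choose_mul_pow r hωa).mul_right
    ((∑' j, ‖c j‖ * a ^ j) * (a ^ σ / |σ - round σ|))).of_norm_bounded fun k => ?_
  have hround : σ - k - round (σ - k) = σ - round σ := by
    rw [round_sub_natCast]; push_cast; ring
  have hle := norm_finitePart_le (σ := σ - k)
    (sub_ne_zero.1 (hround ▸ sub_ne_zero.2 hσ)) hc ha le_rfl
  rw [hround, Real.rpow_sub_natCast ha.ne'] at hle
  rw [norm_smul, norm_mul, norm_pow, Real.norm_eq_abs, Real.norm_eq_abs]
  calc |Ring.choose r k| * |ω| ^ k * ‖finitePart a (σ - k) c‖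
      ≤ |Ring.choose r k| * |ω| ^ k *
          ((∑' j, ‖c j‖ * a ^ j) * (a ^ σ / a ^ k / |σ - round σ|)) := by gcongr
    _ = _ := by rw [abs_div, abs_of_pos ha, div_pow]; ring

theorem summable_rpow_div_smul (hσ : σ ≠ round σ) (hc : Summable fun j => ‖c j‖ * a ^ j)
    (hx : 0 < x) (hxa : x ≤ a) : Summable fun j : ℕ => (x ^ (j + σ) / (j + σ)) • c j :=
  (hc.mul_right _).of_norm_bounded (norm_rpow_div_smul_le hσ hx hxa)

theorem finitePart_of_eq_add_mul {d : ℕ → E} {b : E} {ω : ℝ} (hσ : σ ≠ round σ) (ha : 0 < a)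
    (hd : Summable fun j => ‖d j‖ * a ^ j) (hzero : c 0 = b + ω • d 0)
    (hsucc : ∀ j, c (j + 1) = ω • d (j + 1) + d j) :
    finitePart a σ c = (a ^ σ / σ) • b + (ω • finitePart a σ d + finitePart a (σ + 1) d) := by
  have hσ1 : σ + 1 ≠ round (σ + 1) := by simpa using hσ
  have hscaled := (summable_rpow_div_smul hσ hd ha le_rfl).hasSum.const_smul ω
  have hshifted := (summable_rpow_div_smul hσ1 hd ha le_rfl).hasSum
  set rest : ℕ → E := fun j =>
    j.casesOn ((a ^ σ / σ) • b) fun j => (a ^ (j + (σ + 1)) / (j + (σ + 1))) • d j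
  have hrest : HasSum rest ((a ^ σ / σ) • b + finitePart a (σ + 1) d) := by
    rw [← hasSum_nat_add_iff' 1]
    simpa [rest] using! hshifted
  refine HasSum.tsum_eq ?_
  rw [add_left_comm]
  refine (hscaled.add hrest).congr_fun fun j => ?_
  cases j with
  | zero =>
    simp only [rest, hzero, Nat.cast_zero, zero_add]
    rw [smul_add, smul_comm ω, add_comm]
    rfl
  | succ j =>
    simp only [rest, hsucc, Nat.cast_succ, show (j : ℝ) + (σ + 1) = j + 1 + σ by ring]
    module

theorem hasSum_choose_smul_finitePart_of_eq_add_mul {d : ℕ → E} {b I : E} {r ω J : ℝ}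
    (hσ : σ ≠ round σ) (hω : |ω| < a) (hd : Summable fun j => ‖d j‖ * a ^ j)
    (hzero : c 0 = b + ω • d 0) (hsucc : ∀ j, c (j + 1) = ω • d (j + 1) + d j)
    (hJ : HasSum (fun k : ℕ => Ring.choose (r - 1) k * ω ^ k * (a ^ (σ - k) / (σ - k))) J)
    (hI : HasSum (fun k : ℕ => (Ring.choose r k * ω ^ k) • finitePart a (σ + 1 - k) d) I) :
    HasSum (fun k : ℕ => (Ring.choose (r - 1) k * ω ^ k) • finitePart a (σ - k) c) (J • b + I) := by
  have hshift (k : ℕ) : σ + 1 - (k + 1 : ℕ) = σ - k := by push_cast; ring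
  have hsub (k : ℕ) : σ - k ≠ round (σ - k) := by simpa using hσ
  have hI' : HasSum (fun k : ℕ => (Ring.choose (r - 1) k * ω ^ k) •
      (ω • finitePart a (σ - k) d + finitePart a (σ - k + 1) d)) I := by
    have := hasSum_choose_sub_one_smul (u := fun k : ℕ => finitePart a (σ + 1 - k) d)
      (by simpa only [hshift] using summable_choose_smul_finitePart hσ hd hω) hI
    simpa only [hshift, sub_add_eq_add_sub] using this
  refine ((hJ.smul_const b).add hI').congr_fun fun k => ?_
  rw [finitePart_of_eq_add_mul (hsub k) ((abs_nonneg ω).trans_lt hω) hd hzero hsucc, smul_add,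
    smul_smul]

theorem finitePart_sub_sum_range (hσ : σ ≠ round σ) (hc : Summable fun j => ‖c j‖ * a ^ j)
    (hx : 0 < x) (hxa : x ≤ a) (p : ℕ) :
    finitePart x σ c - ∑ j ∈ Finset.range p, (x ^ (j + σ) / (j + σ)) • c j =
      finitePart x (σ + p) fun j => c (j + p) := by
  rw [finitePart, ← (summable_rpow_div_smul hσ hc hx hxa).sum_add_tsum_nat_add p,
    add_sub_cancel_left]
  refine tsum_congr fun j => ?_
  rw [Nat.cast_add, add_assoc, add_comm (p : ℝ)]

variable {f : ℝ → E} {ε : ℝ}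

theorem hasSum_integral_rpow_smul (hf : ∀ x ∈ Ioc 0 a, HasSum (fun j => x ^ j • c j) (f x))
    (hc : Summable fun j => ‖c j‖ * a ^ j) (hε : 0 ≤ ε) (hεa : ε ≤ a) {s : ℝ}
    (hs : IntervalIntegrable (fun x => x ^ s) volume ε a) :
    HasSum (fun j : ℕ => (∫ x in ε..a, x ^ (j + s)) • c j) (∫ x in ε..a, x ^ s • f x) := by
  have hpos {x : ℝ} (hx : x ∈ uIoc ε a) : 0 < x := hε.trans_lt (uIoc_of_le hεa ▸ hx).1
  have hle {x : ℝ} (hx : x ∈ uIoc ε a) : x ≤ a := (uIoc_of_le hεa ▸ hx).2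
  simp only [← intervalIntegral.integral_smul_const]
  refine intervalIntegral.hasSum_integral_of_dominated_convergence
    (fun j x => ‖c j‖ * a ^ j * x ^ s) (fun j => ?_) (fun j => ae_of_all _ fun x hx => ?_)
    (ae_of_all _ fun x _ => hc.mul_right _) ?_ (ae_of_all _ fun x hx => ?_)
  · exact (Measurable.aestronglyMeasurable (by fun_prop)).smul_const _
  · have := hpos hx
    rw [norm_smul, Real.norm_of_nonneg (by positivity), add_comm, Real.rpow_add_natCast this.ne']
    calc x ^ s * x ^ j * ‖c j‖ = ‖c j‖ * x ^ j * x ^ s := by ring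
      _ ≤ ‖c j‖ * a ^ j * x ^ s := by gcongr; exact hle hx
  · simpa only [tsum_mul_right] using hs.const_mul _
  · refine ((hf x ⟨hpos hx, hle hx⟩).const_smul (x ^ s)).congr_fun fun j => ?_
    rw [add_comm, Real.rpow_add_natCast (hpos hx).ne', mul_smul]

theorem integral_rpow_smul_eq_finitePart_sub
    (hf : ∀ x ∈ Ioc 0 a, HasSum (fun j => x ^ j • c j) (f x))
    (hc : Summable fun j => ‖c j‖ * a ^ j) (hσ : σ ≠ round σ) (hε : 0 < ε) (hεa : ε ≤ a) :
    ∫ x in ε..a, x ^ (σ - 1) • f x = finitePart a σ c - finitePart ε σ c := by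
  have hmem : (0 : ℝ) ∉ uIcc ε a := fun h => hε.not_ge (uIcc_of_le hεa ▸ h).1
  refine (hasSum_integral_rpow_smul hf hc hε.le hεa
    (intervalIntegral.intervalIntegrable_rpow (.inr hmem))).unique ?_
  refine ((summable_rpow_div_smul hσ hc (hε.trans_le hεa) le_rfl).hasSum.sub
    (summable_rpow_div_smul hσ hc hε hεa).hasSum).congr_fun fun j => ?_
  have hj := natCast_add_ne_zero hσ j
  rw [integral_rpow (.inr ⟨fun h => hj (by linarith), hmem⟩),
    show (j : ℝ) + (σ - 1) + 1 = j + σ by ring, sub_div, sub_smul]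

theorem integral_rpow_smul_eq_finitePart
    (hf : ∀ x ∈ Ioc 0 a, HasSum (fun j => x ^ j • c j) (f x))
    (hc : Summable fun j => ‖c j‖ * a ^ j) (hσ : 0 < σ) (ha : 0 ≤ a) :
    ∫ x in 0..a, x ^ (σ - 1) • f x = finitePart a σ c := by
  refine ((hasSum_integral_rpow_smul hf hc le_rfl ha
    (intervalIntegral.intervalIntegrable_rpow' (by linarith))).congr_fun fun j => ?_).tsum_eq.symm
  have hj : 0 < j + σ := by positivity
  rw [integral_rpow (.inl (by linarith)), show (j : ℝ) + (σ - 1) + 1 = j + σ by ring,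
    Real.zero_rpow hj.ne', sub_zero]

theorem tendsto_integral_add_sum_finitePart
    (hf : ∀ x ∈ Ioc 0 a, HasSum (fun j => x ^ j • c j) (f x))
    (hc : Summable fun j => ‖c j‖ * a ^ j) (hσ : σ ≠ round σ) (ha : 0 < a) {p : ℕ}
    (hp : 0 < σ + p) :
    Tendsto (fun ε => (∫ x in ε..a, x ^ (σ - 1) • f x) +
        ∑ j ∈ Finset.range p, (ε ^ (j + σ) / (j + σ)) • c j)
      (𝓝[>] 0) (𝓝 (finitePart a σ c)) := by
  have htail : Summable fun j => ‖c (j + p)‖ * a ^ j := by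
    refine (((summable_nat_add_iff p).2 hc).div_const (a ^ p)).congr fun j => ?_
    rw [pow_add]
    field_simp
  have hlim := (tendsto_finitePart_nhdsGT_zero (by simpa using hσ) hp ha htail).const_sub
    (finitePart a σ c)
  rw [sub_zero] at hlim
  refine hlim.congr' ?_
  filter_upwards [Ioc_mem_nhdsGT ha] with ε hε
  rw [integral_rpow_smul_eq_finitePart_sub hf hc hσ hε.1 hε.2,
    ← finitePart_sub_sum_range hσ hc hε.1 hε.2 p, sub_sub_eq_add_sub, add_sub_right_comm]

end FinitePart

section TaylorCoeff

/-- The `j`-th Taylor coefficient of `F` at `z`. -/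
noncomputable def taylorCoeff (F : ℂ → ℂ) (z : ℂ) (j : ℕ) : ℂ :=
  iteratedDeriv j F z / j.factorial

theorem taylorCoeff_zero (F : ℂ → ℂ) (z : ℂ) : taylorCoeff F z 0 = F z := by
  simp [taylorCoeff]

theorem iteratedDeriv_sub_const_mul_succ {G : ℂ → ℂ} {z : ℂ} (hG : AnalyticAt ℂ G z) (w : ℂ)
    (m : ℕ) :
    iteratedDeriv (m + 1) (fun ζ => (ζ - w) * G ζ) z =
      (z - w) * iteratedDeriv (m + 1) G z + (m + 1) * iteratedDeriv m G z := by
  rw [iteratedDeriv_fun_mul (by fun_prop) hG.contDiffAt, Finset.sum_range_succ',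
    Finset.sum_range_succ', Finset.sum_eq_zero]
  · simp [iteratedDeriv_succ', iteratedDeriv_zero, add_comm]
  · intro i _
    simp [iteratedDeriv_succ', iteratedDeriv_const]

theorem taylorCoeff_const_add_sub_mul_succ {G : ℂ → ℂ} {z : ℂ} (hG : AnalyticAt ℂ G z) (b w : ℂ)
    (m : ℕ) :
    taylorCoeff (fun ζ => b + (ζ - w) * G ζ) z (m + 1) =
      (z - w) * taylorCoeff G z (m + 1) + taylorCoeff G z m := by
  have := m.cast_add_one_ne_zero (R := ℂ)
  rw [taylorCoeff, iteratedDeriv_const_add m.succ_pos, iteratedDeriv_sub_const_mul_succ hG,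
    taylorCoeff, taylorCoeff, Nat.factorial_succ]
  push_cast
  field_simp

variable {F : ℂ → ℂ} {R : ℝ}

theorem hasSum_pow_smul_taylorCoeff (hF : DifferentiableOn ℂ F (Metric.ball 0 R)) {x : ℝ}
    (hx : |x| < R) : HasSum (fun j => x ^ j • taylorCoeff F 0 j) (F x) := by
  refine (Complex.hasSum_taylorSeries_on_ball hF (z := x) (by simpa using hx)).congr_fun fun j => ?_
  simp only [taylorCoeff, sub_zero, smul_eq_mul, Complex.real_smul, Complex.ofReal_pow]
  ring

theorem summable_norm_taylorCoeff_mul_pow (hF : DifferentiableOn ℂ F (Metric.ball 0 R)) {a : ℝ}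
    (ha : 0 ≤ a) (haR : a < R) : Summable fun j => ‖taylorCoeff F 0 j‖ * a ^ j := by
  refine (hasSum_pow_smul_taylorCoeff hF (abs_of_nonneg ha ▸ haR)).summable.norm.congr fun j => ?_
  rw [norm_smul, norm_pow, Real.norm_of_nonneg ha, mul_comm]

end TaylorCoeff

section StieltjesIntegral

theorem integral_Ioo_rpow_mul_one_sub_rpow {u v : ℝ} (hu : 0 < u) (hv : 0 < v) :
    ∫ t in Ioo (0 : ℝ) 1, t ^ (u - 1) * (1 - t) ^ (v - 1) = ProbabilityTheory.beta u v := by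
  rw [ProbabilityTheory.beta_eq_betaIntegralReal u v hu hv, Complex.betaIntegral,
    intervalIntegral.integral_of_le zero_le_one, integral_Ioc_eq_integral_Ioo]
  rw [← Complex.ofReal_re (∫ t in Ioo (0 : ℝ) 1, _), ← integral_complex_ofReal]
  congr 1
  refine setIntegral_congr_fun measurableSet_Ioo fun t ht => ?_
  have : 0 ≤ 1 - t := sub_nonneg.2 ht.2.le
  simp [Complex.ofReal_cpow, ht.1.le, this]

variable {u v ω : ℝ}

theorem bijOn_div_add_Ioi (hω : 0 < ω) : BijOn (fun x : ℝ => x / (ω + x)) (Ioi 0) (Ioo 0 1) := by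
  refine InvOn.bijOn (f' := fun t => ω * t / (1 - t)) ⟨fun x hx => ?_, fun t ht => ?_⟩
    (fun x hx => ?_) fun t ht => ?_
  · have hx : 0 < x := hx
    have hone_sub : 1 - x / (ω + x) = ω / (ω + x) := by field_simp; ring
    simp only
    rw [hone_sub]
    field_simp
  · have : 0 < 1 - t := sub_pos.2 ht.2
    simp only
    field_simp
    ring
  · have hx : 0 < x := hx
    exact ⟨by positivity, by rw [div_lt_one (by positivity)]; linarith⟩
  · have := ht.1
    have : 0 < 1 - t := sub_pos.2 ht.2
    exact mem_Ioi.2 (by positivity)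

theorem hasDerivAt_div_const_add {x : ℝ} (hx : ω + x ≠ 0) :
    HasDerivAt (fun x : ℝ => x / (ω + x)) (ω / (ω + x) ^ 2) x := by
  convert! (hasDerivAt_id x).div ((hasDerivAt_id x).const_add ω) hx using 1
  simp

theorem integral_Ioi_rpow_div_add_rpow (hu : 0 < u) (hv : 0 < v) (hω : 0 < ω) :
    ∫ x in Ioi (0 : ℝ), x ^ (u - 1) / (ω + x) ^ (u + v) = ProbabilityTheory.beta u v / ω ^ v := by
  have hbij := bijOn_div_add_Ioi hω
  have hpos {x : ℝ} (hx : x ∈ Ioi 0) : 0 < ω + x := add_pos hω hx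
  rw [← integral_Ioo_rpow_mul_one_sub_rpow hu hv, ← hbij.image_eq,
    integral_image_eq_integral_abs_deriv_smul measurableSet_Ioi
      (fun x hx => (hasDerivAt_div_const_add (hpos hx).ne').hasDerivWithinAt) hbij.injOn,
    ← integral_div]
  refine setIntegral_congr_fun measurableSet_Ioi fun x hx => ?_
  have hx0 : 0 < x := hx
  have hy := hpos hx
  have hone_sub : 1 - x / (ω + x) = ω / (ω + x) := by field_simp; ring
  have hω' := (Real.rpow_pos_of_pos hω v).ne'
  rw [hone_sub, abs_of_pos (by positivity), Real.div_rpow hx0.le hy.le, Real.div_rpow hω.le hy.le,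
    smul_eq_mul, Real.rpow_sub_one hω.ne' v, Real.rpow_sub_one hy.ne', Real.rpow_sub_one hy.ne',
    Real.rpow_add hy]
  field_simp

theorem integrableOn_Ioi_rpow_div_add_rpow (hu : 0 < u) (hv : 0 < v) (hω : 0 < ω) :
    IntegrableOn (fun x : ℝ => x ^ (u - 1) / (ω + x) ^ (u + v)) (Ioi 0) :=
  .of_integral_ne_zero <| by
    rw [integral_Ioi_rpow_div_add_rpow hu hv hω]
    exact (div_pos (ProbabilityTheory.beta_pos hu hv) (Real.rpow_pos_of_pos hω v)).ne'

theorem Gamma_add_natCast_eq_prod {ν : ℝ} (hν : 0 < ν) (n : ℕ) :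
    Real.Gamma (ν + n) = (∏ i ∈ Finset.range n, (ν + i)) * Real.Gamma ν := by
  induction n with
  | zero => simp
  | succ n ih =>
    rw [Finset.prod_range_succ, Nat.cast_succ, ← add_assoc, Real.Gamma_add_one (by positivity), ih]
    ring

variable {ν : ℝ}

theorem integrableOn_Ioi_rpow_neg_div_add_pow (hν0 : 0 < ν) (hν1 : ν < 1) (hω : 0 < ω) (n : ℕ) :
    IntegrableOn (fun x : ℝ => x ^ (-ν) / (ω + x) ^ (n + 1)) (Ioi 0) := by
  have := integrableOn_Ioi_rpow_div_add_rpow (u := 1 - ν) (v := ν + n) (by linarith)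
    (by positivity) hω
  simpa only [show 1 - ν - 1 = -ν by ring, show 1 - ν + (ν + n) = (n + 1 : ℕ) by push_cast; ring,
    Real.rpow_natCast] using this

theorem integral_Ioi_rpow_neg_div_add_pow (hν0 : 0 < ν) (hν1 : ν < 1) (hω : 0 < ω) (n : ℕ) :
    ∫ x in Ioi (0 : ℝ), x ^ (-ν) / (ω + x) ^ (n + 1) =
      Real.pi / (Real.sin (Real.pi * ν) * ω ^ ν) *
        ((∏ i ∈ Finset.range n, (ν + i)) / (n.factorial * ω ^ n)) := by
  have := integral_Ioi_rpow_div_add_rpow (u := 1 - ν) (v := ν + n) (by linarith)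
    (by positivity) hω
  rw [ProbabilityTheory.beta, Gamma_add_natCast_eq_prod hν0,
    show 1 - ν + (ν + n) = (n + 1 : ℕ) by push_cast; ring, Nat.cast_succ,
    Real.Gamma_nat_eq_factorial, Real.rpow_add_natCast hω.ne'] at this
  simp only [show 1 - ν - 1 = -ν by ring, ← Nat.cast_succ, Real.rpow_natCast] at this
  rw [this, ← div_div Real.pi, ← Real.Gamma_mul_Gamma_one_sub]
  field_simp

end StieltjesIntegral

section Expansion

variable {ν ω a : ℝ}

/-- The integral over `(0, ∞)` of `x ^ (-ν)` times the principal part of `F z / (z + ω) ^ n` at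
`-ω`, by which the true integral exceeds the termwise finite-part integration. -/
noncomputable def principalPartIntegral (ν ω : ℝ) (F : ℂ → ℂ) (n : ℕ) : ℂ :=
  ∑ k ∈ Finset.range n,
    (∫ x in Ioi (0 : ℝ), x ^ (-ν) / (ω + x) ^ (k + 1)) • taylorCoeff F (-ω) (n - 1 - k)

theorem principalPartIntegral_const_add_mul_succ {G : ℂ → ℂ} (hG : AnalyticAt ℂ G (-ω))
    (b : ℂ) (n : ℕ) :
    principalPartIntegral ν ω (fun z => b + (z - -ω) * G z) (n + 1) =
      (∫ x in Ioi (0 : ℝ), x ^ (-ν) / (ω + x) ^ (n + 1)) • b + principalPartIntegral ν ω G n := by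
  rw [principalPartIntegral, Finset.sum_range_succ, add_comm]
  congr 1
  · simp [taylorCoeff_zero]
  · refine Finset.sum_congr rfl fun k hk => ?_
    rw [show n + 1 - 1 - k = n - 1 - k + 1 by have := Finset.mem_range.1 hk; omega,
      taylorCoeff_const_add_sub_mul_succ hG, sub_self, zero_mul, zero_add]

theorem principalPartIntegral_eq (hν0 : 0 < ν) (hν1 : ν < 1) (hω : 0 < ω) (F : ℂ → ℂ)
    (n : ℕ) :
    principalPartIntegral ν ω F n =
      ((Real.pi / (Real.sin (Real.pi * ν) * ω ^ ν) : ℝ) : ℂ) *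
        ∑ k ∈ Finset.range n,
          iteratedDeriv (n - 1 - k) F (-(ω : ℂ)) *
            ((∏ i ∈ Finset.range k, (ν + (i : ℝ)) : ℝ) : ℂ) /
            ((Nat.factorial k : ℂ) * (Nat.factorial (n - 1 - k) : ℂ) * (ω : ℂ) ^ k) := by
  rw [principalPartIntegral, Finset.mul_sum]
  refine Finset.sum_congr rfl fun k _ => ?_
  rw [integral_Ioi_rpow_neg_div_add_pow hν0 hν1 hω, taylorCoeff, Complex.real_smul,
    Complex.ofReal_mul, Complex.ofReal_div (∏ i ∈ Finset.range k, (ν + (i : ℝ)))]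
  push_cast
  ring

theorem neg_ne_round_neg (hν0 : 0 < ν) (hν1 : ν < 1) : -ν ≠ round (-ν) := by
  intro h
  generalize round (-ν) = m at h
  obtain rfl : ν = (-m : ℤ) := by push_cast; linarith
  norm_cast at hν0 hν1
  omega

theorem intervalIntegrable_rpow_neg_div_add_pow_smul {E : Type*} [NormedAddCommGroup E]
    [NormedSpace ℝ E] {f : ℝ → E} (hν : ν < 1) (hω : 0 < ω) (ha : 0 ≤ a) (n : ℕ)
    (hf : ContinuousOn f (Icc 0 a)) :
    IntervalIntegrable (fun x => (x ^ (-ν) / (ω + x) ^ n) • f x) volume 0 a := by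
  have hdenom : ContinuousOn (fun x : ℝ => ((ω + x) ^ n)⁻¹ • f x) (uIcc 0 a) := by
    rw [uIcc_of_le ha]
    refine ContinuousOn.smul (ContinuousOn.inv₀ (by fun_prop) fun x hx => ?_) hf
    have := hx.1
    positivity
  simpa only [smul_smul, div_eq_mul_inv] using
    (intervalIntegral.intervalIntegrable_rpow' (neg_lt_neg hν)).smul_continuousOn hdenom

theorem integral_rpow_neg_div_add_pow_smul_const_add_smul {E : Type*} [NormedAddCommGroup E]
    [NormedSpace ℝ E] [CompleteSpace E] {f : ℝ → E} (hν : ν < 1) (hω : 0 < ω)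
    (ha : 0 ≤ a) (n : ℕ) (b : E) (hf : ContinuousOn f (Icc 0 a)) :
    ∫ x in 0..a, (x ^ (-ν) / (ω + x) ^ (n + 1)) • (b + (ω + x) • f x) =
      (∫ x in 0..a, x ^ (-ν) / (ω + x) ^ (n + 1)) • b +
        ∫ x in 0..a, (x ^ (-ν) / (ω + x) ^ n) • f x := by
  rw [← intervalIntegral.integral_smul_const, ← intervalIntegral.integral_add
    (intervalIntegrable_rpow_neg_div_add_pow_smul hν hω ha (n + 1) continuousOn_const)
    (intervalIntegrable_rpow_neg_div_add_pow_smul hν hω ha n hf)]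
  refine intervalIntegral.integral_congr fun x hx => ?_
  have : ω + x ≠ 0 := (add_pos_of_pos_of_nonneg hω (uIcc_of_le ha ▸ hx).1).ne'
  simp only [smul_add, smul_smul]
  congr 2
  field_simp
  ring

theorem hasSum_choose_mul_rpow_intervalIntegral (hν0 : 0 < ν) (hν1 : ν < 1)
    (hω : 0 < ω) (ha : ω < a) (n : ℕ) :
    HasSum (fun k : ℕ => Ring.choose (-(n : ℝ) - 1) k * ω ^ k *
        (a ^ (-ν - n - k) / (-ν - n - k)))
      ((∫ x in 0..a, x ^ (-ν) / (ω + x) ^ (n + 1)) -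
        ∫ x in Ioi (0 : ℝ), x ^ (-ν) / (ω + x) ^ (n + 1)) := by
  have hintegrable := integrableOn_Ioi_rpow_neg_div_add_pow hν0 hν1 hω n
  have htail := hintegrable.mono_set (Ioi_subset_Ioi (hω.trans ha).le)
  rw [← intervalIntegral.integral_interval_add_Ioi hintegrable htail, sub_add_cancel_left]
  have hrpow : ∫ x in Ioi a, x ^ (-ν) / (ω + x) ^ (n + 1) =
      ∫ x in Ioi a, x ^ (-ν - n - 1 - (-n - 1)) * (ω + x) ^ (-n - 1 : ℝ) := by
    refine setIntegral_congr_fun measurableSet_Ioi fun x hx => ?_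
    have hx : 0 < ω + x := add_pos hω ((hω.trans ha).trans hx)
    rw [show -ν - n - 1 - (-n - 1) = -ν by ring, ← neg_add', Real.rpow_neg hx.le, ← Nat.cast_succ,
      Real.rpow_natCast, div_eq_mul_inv]
  rw [hrpow]
  exact hasSum_integral_Ioi_rpow_mul_add_rpow (by linarith [Nat.cast_nonneg (α := ℝ) n])
    (by rwa [abs_of_pos hω])

variable {F G : ℂ → ℂ} {R : ℝ}

theorem hasSum_choose_zero_smul {E : Type*} [NormedAddCommGroup E] [NormedSpace ℝ E] (ω : ℝ)
    (u : ℕ → E) : HasSum (fun k => (Ring.choose (0 : ℝ) k * ω ^ k) • u k) (u 0) := by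
  simpa using hasSum_single (f := fun k => (Ring.choose (0 : ℝ) k * ω ^ k) • u k) 0 fun k hk => by
    simp [Ring.choose_zero_pos ℝ (Nat.pos_of_ne_zero hk)]

theorem integral_rpow_neg_smul_eq_finitePart (hν : ν < 1) (ha : 0 ≤ a) (haR : a < R)
    (hF : DifferentiableOn ℂ F (Metric.ball 0 R)) :
    ∫ x in 0..a, x ^ (-ν) • F x = finitePart a (1 - ν) (taylorCoeff F 0) := by
  have hf (x : ℝ) (hx : x ∈ Ioc 0 a) : HasSum (fun j => x ^ j • taylorCoeff F 0 j) (F x) :=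
    hasSum_pow_smul_taylorCoeff hF ((abs_of_pos hx.1).trans_lt (hx.2.trans_lt haR))
  rw [← integral_rpow_smul_eq_finitePart hf (summable_norm_taylorCoeff_mul_pow hF ha haR)
    (sub_pos.2 hν) ha, sub_sub_cancel_left]

theorem hasSum_choose_smul_finitePart_const_add_sub_mul {b I : ℂ} {n : ℕ} (hν0 : 0 < ν)
    (hν1 : ν < 1) (hω : 0 < ω) (ha : ω < a) (haR : a < R)
    (hG : DifferentiableOn ℂ G (Metric.ball 0 R))
    (hI : HasSum (fun k : ℕ => (Ring.choose (-(n : ℝ)) k * ω ^ k) •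
      finitePart a (1 - ν - n - k) (taylorCoeff G 0)) I) :
    HasSum (fun k : ℕ => (Ring.choose (-(n : ℝ) - 1) k * ω ^ k) •
        finitePart a (-ν - n - k) (taylorCoeff (fun z => b + (z - -ω) * G z) 0))
      (((∫ x in 0..a, x ^ (-ν) / (ω + x) ^ (n + 1)) -
        ∫ x in Ioi (0 : ℝ), x ^ (-ν) / (ω + x) ^ (n + 1)) • b + I) := by
  have ha0 := hω.trans ha
  have hG0 : AnalyticAt ℂ G 0 := hG.analyticAt (Metric.ball_mem_nhds 0 (ha0.trans haR))
  have hσ : -ν - n + 1 = 1 - ν - n := by ring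
  exact hasSum_choose_smul_finitePart_of_eq_add_mul (by simpa using neg_ne_round_neg hν0 hν1)
    ((abs_of_pos hω).trans_lt ha) (summable_norm_taylorCoeff_mul_pow hG ha0.le haR)
    (by simp [taylorCoeff_zero])
    (fun j => by rw [taylorCoeff_const_add_sub_mul_succ hG0]; simp)
    (hasSum_choose_mul_rpow_intervalIntegral hν0 hν1 hω ha n) (by simpa only [hσ] using hI)

theorem hasSum_choose_smul_finitePart (hν0 : 0 < ν) (hν1 : ν < 1) (hω : 0 < ω) (ha : ω < a)
    (haR : a < R) (hF : DifferentiableOn ℂ F (Metric.ball 0 R)) (n : ℕ) :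
    HasSum (fun k : ℕ => (Ring.choose (-(n : ℝ)) k * ω ^ k) •
        finitePart a (1 - ν - n - k) (taylorCoeff F 0))
      ((∫ x in 0..a, (x ^ (-ν) / (ω + x) ^ n) • F x) - principalPartIntegral ν ω F n) := by
  have ha0 := hω.trans ha
  induction n generalizing F with
  | zero =>
    simpa [principalPartIntegral, ← integral_rpow_neg_smul_eq_finitePart hν1 ha0.le haR hF] using
      hasSum_choose_zero_smul ω fun k : ℕ => finitePart a (1 - ν - k) (taylorCoeff F 0)
  | succ n ih =>
    have hωR : -(ω : ℂ) ∈ Metric.ball (0 : ℂ) R := by simpa [abs_of_pos hω] using ha.trans haR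
    obtain ⟨b, G, hG, rfl⟩ : ∃ b, ∃ G : ℂ → ℂ, DifferentiableOn ℂ G (Metric.ball 0 R) ∧
        (fun z => b + (z - -ω) * G z) = F :=
      ⟨F (-ω), dslope F (-ω),
        (Complex.differentiableOn_dslope (Metric.isOpen_ball.mem_nhds hωR)).2 hF,
        funext fun z => by rw [← smul_eq_mul, sub_smul_dslope, add_sub_cancel]⟩
    have hGω : AnalyticAt ℂ G (-ω) := hG.analyticAt (Metric.isOpen_ball.mem_nhds hωR)
    have hGcont : ContinuousOn (fun x : ℝ => G x) (Icc 0 a) :=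
      hG.continuousOn.comp (by fun_prop) fun x hx => by
        simpa [abs_of_nonneg hx.1] using hx.2.trans_lt haR
    have hfactor (x : ℝ) : b + (x - -ω) * G x = b + (ω + x) • G x := by
      simp [add_comm]
    simp only [hfactor]
    rw [integral_rpow_neg_div_add_pow_smul_const_add_smul hν1 hω ha0.le n b hGcont,
      principalPartIntegral_const_add_mul_succ hGω, add_sub_add_comm, ← sub_smul]
    refine (hasSum_choose_smul_finitePart_const_add_sub_mul hν0 hν1 hω ha haR hG
      (ih hG)).congr_fun fun k => ?_
    rw [Nat.cast_succ, neg_add', show 1 - ν - (n + 1) = -ν - n by ring]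

end Expansion

section RealFunctions

variable {f : ℝ → ℝ} {c : ℕ → ℝ} {a ν : ℝ}

theorem finitePart_ofReal (a σ : ℝ) (c : ℕ → ℝ) :
    finitePart a σ (fun j => (c j : ℂ)) = finitePart a σ c := by
  simp [finitePart, Complex.ofReal_tsum]

theorem tendsto_integral_sub_sum_finitePart
    (hf : ∀ x ∈ Ioc 0 a, HasSum (fun j => x ^ j * c j) (f x))
    (hc : Summable fun j => ‖c j‖ * a ^ j) (ha : 0 < a) (hν0 : 0 < ν) (hν1 : ν < 1) (p : ℕ) :
    Tendsto (fun ε => (∫ x in ε..a, f x / x ^ (p + ν)) -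
        ∑ j ∈ Finset.range p, c j * ε ^ ((j : ℝ) + 1 - p - ν) / (p + ν - j - 1))
      (𝓝[>] 0) (𝓝 (finitePart a (1 - ν - p) c)) := by
  have hσ : 1 - ν - p ≠ round (1 - ν - p) := by
    simpa [sub_eq_neg_add (1 : ℝ) ν] using neg_ne_round_neg hν0 hν1
  refine (tendsto_integral_add_sum_finitePart hf hc hσ ha (p := p) (by linarith)).congr' ?_
  filter_upwards [Ioc_mem_nhdsGT ha] with ε hε
  rw [sub_eq_add_neg (∫ x in ε..a, f x / x ^ (p + ν)), ← Finset.sum_neg_distrib]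
  congr 1
  · refine intervalIntegral.integral_congr fun x hx => ?_
    have hx : 0 < x := hε.1.trans_le (uIcc_of_le hε.2 ▸ hx).1
    rw [show 1 - ν - p - 1 = -(p + ν) by ring, Real.rpow_neg hx.le, smul_eq_mul,
      div_eq_inv_mul]
  · refine Finset.sum_congr rfl fun j _ => ?_
    rw [← div_neg, show -((p : ℝ) + ν - j - 1) = j + (1 - ν - p) by ring,
      show (j : ℝ) + 1 - p - ν = j + (1 - ν - p) by ring, smul_eq_mul, div_mul_eq_mul_div, mul_comm]

theorem hasSum_choose_mul_finitePart_of_ofReal {F : ℂ → ℂ} {ω R : ℝ}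
    (hν0 : 0 < ν) (hν1 : ν < 1) (hω : 0 < ω) (ha : ω < a) (haR : a < R)
    (hF : DifferentiableOn ℂ F (Metric.ball 0 R)) (hFf : ∀ x ∈ Icc 0 a, F x = f x)
    (hc : ∀ j, (c j : ℂ) = taylorCoeff F 0 j) (n : ℕ) :
    HasSum (fun k : ℕ =>
        (((-1) ^ k * (n + k - 1).choose k * ω ^ k * finitePart a (1 - ν - (n + k : ℕ)) c : ℝ) : ℂ))
      ((∫ x in 0..a, x ^ (-ν) * f x / (ω + x) ^ n : ℝ) - principalPartIntegral ν ω F n) := by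
  have hintegral : ∫ x in 0..a, (x ^ (-ν) / (ω + x) ^ n) • F x =
      (∫ x in 0..a, x ^ (-ν) * f x / (ω + x) ^ n : ℝ) := by
    rw [← intervalIntegral.integral_ofReal]
    refine intervalIntegral.integral_congr fun x hx => ?_
    simp only [hFf x (uIcc_of_le (hω.trans ha).le ▸ hx), Complex.real_smul, ← Complex.ofReal_mul]
    rw [div_mul_eq_mul_div]
  rw [← hintegral]
  refine (hasSum_choose_smul_finitePart hν0 hν1 hω ha haR hF n).congr_fun fun k => ?_
  rw [← funext hc, finitePart_ofReal, ringChoose_neg_natCast, Nat.cast_add, ← sub_sub,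
    Complex.real_smul, ← Complex.ofReal_mul]

end RealFunctions

theorem stmt_11_general (f : ℝ → ℝ) (F : ℂ → ℂ) (c : ℕ → ℝ) (ω a R : ℝ) (hω : 0 < ω)
    (ha : ω < a) (haR : a < R)
    (hF : DifferentiableOn ℂ F (Metric.ball 0 R)) (hFf : ∀ x ∈ Icc 0 a, F x = f x)
    (hc : ∀ j, (c j : ℂ) = iteratedDeriv j F 0 / (Nat.factorial j))
    (n : ℕ) (ν : ℝ) (hν0 : 0 < ν) (hν1 : ν < 1) :
    ∃ fp : ℕ → ℝ, ∃ S : ℝ,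
      (∀ k : ℕ,
        Tendsto
          (fun ε : ℝ =>
            (∫ x in ε..a, f x / x ^ (((n + k : ℕ) : ℝ) + ν)) -
              ∑ j ∈ Finset.range (n + k),
                c j * ε ^ ((j : ℝ) + 1 - (n + k : ℕ) - ν) /
                  (((n + k : ℕ) : ℝ) + ν - j - 1))
          (𝓝[>] 0) (𝓝 (fp k))) ∧
      HasSum (fun k : ℕ =>
        (-1 : ℝ) ^ k * (Nat.choose (n + k - 1) k : ℝ) * ω ^ k * fp k) S ∧
      ((∫ x in (0 : ℝ)..a, x ^ (-ν) * f x / (ω + x) ^ n : ℝ) : ℂ) =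
        (S : ℂ) + ((Real.pi / (Real.sin (Real.pi * ν) * ω ^ ν) : ℝ) : ℂ) *
          ∑ k ∈ Finset.range n,
            iteratedDeriv (n - 1 - k) F (-(ω : ℂ)) *
              ((∏ i ∈ Finset.range k, (ν + (i : ℝ)) : ℝ) : ℂ) /
              ((Nat.factorial k : ℂ) * (Nat.factorial (n - 1 - k) : ℂ) * (ω : ℂ) ^ k) := by
  have ha0 := hω.trans ha
  have hf (x) (hx : x ∈ Ioc 0 a) : HasSum (fun j => x ^ j * c j) (f x) := by
    have := hasSum_pow_smul_taylorCoeff hF ((abs_of_pos hx.1).trans_lt (hx.2.trans_lt haR))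
    simp only [hFf x (Ioc_subset_Icc_self hx), taylorCoeff, ← hc, Complex.real_smul] at this
    exact_mod_cast this
  have hsummable : Summable fun j => ‖c j‖ * a ^ j := by
    simpa [taylorCoeff, ← hc] using summable_norm_taylorCoeff_mul_pow hF ha0.le haR
  have hexpansion := hasSum_choose_mul_finitePart_of_ofReal hν0 hν1 hω ha haR hF hFf hc n
  obtain ⟨S, hS⟩ := Complex.summable_ofReal.1 hexpansion.summable
  refine ⟨fun k => finitePart a (1 - ν - (n + k : ℕ)) c, S,
    fun k => tendsto_integral_sub_sum_finitePart hf hsummable ha0 hν0 hν1 (n + k), hS, ?_⟩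
  rw [← principalPartIntegral_eq hν0 hν1 hω, ← sub_eq_iff_eq_add]
  exact hexpansion.unique (Complex.hasSum_ofReal.2 hS)

/-- Finite-part integration of the incomplete generalized Stieltjes transform of
integral order `n` of `x^{-ν} f(x)`, `0 < ν < 1`:
`∫_0^a x^{-ν}f(x)/(ω+x)^n dx = Σ_k binom(-n,k) ω^k ⨍_0^a f/x^{n+k+ν}
+ (π/(sin(πν) ω^ν)) Σ_{k=0}^{n-1} F^{(n-1-k)}(-ω)(ν)_k/(k!(n-1-k)! ω^k)`. -/
theorem stmt_11 (f : ℝ → ℝ) (F : ℂ → ℂ) (c : ℕ → ℝ)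
    (hF : Differentiable ℂ F) (hFf : ∀ x : ℝ, F x = f x)
    (hc : ∀ j, (c j : ℂ) = iteratedDeriv j F 0 / (Nat.factorial j))
    (n : ℕ) (hn : 1 ≤ n) (ν : ℝ) (hν0 : 0 < ν) (hν1 : ν < 1)
    (ω a : ℝ) (hω : 0 < ω) (ha : ω < a) :
    ∃ fp : ℕ → ℝ, ∃ S : ℝ,
      (∀ k : ℕ,
        Tendsto
          (fun ε : ℝ =>
            (∫ x in ε..a, f x / x ^ (((n + k : ℕ) : ℝ) + ν)) -
              ∑ j ∈ Finset.range (n + k),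
                c j * ε ^ ((j : ℝ) + 1 - (n + k : ℕ) - ν) /
                  (((n + k : ℕ) : ℝ) + ν - j - 1))
          (nhdsWithin 0 (Set.Ioi 0)) (nhds (fp k))) ∧
      HasSum (fun k : ℕ =>
        (-1 : ℝ) ^ k * (Nat.choose (n + k - 1) k : ℝ) * ω ^ k * fp k) S ∧
      ((∫ x in (0 : ℝ)..a, x ^ (-ν) * f x / (ω + x) ^ n : ℝ) : ℂ) =
        (S : ℂ) + ((Real.pi / (Real.sin (Real.pi * ν) * ω ^ ν) : ℝ) : ℂ) *
          ∑ k ∈ Finset.range n,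
            iteratedDeriv (n - 1 - k) F (-(ω : ℂ)) *
              ((∏ i ∈ Finset.range k, (ν + (i : ℝ)) : ℝ) : ℂ) /
              ((Nat.factorial k : ℂ) * (Nat.factorial (n - 1 - k) : ℂ) * (ω : ℂ) ^ k) :=
  stmt_11_general f F c ω a (a + 1) hω ha (lt_add_one a) hF.differentiableOn (fun x _ => hFf x) hc n
    ν hν0 hν1
end

section
/- Let r, s, n be positive integers with r + 1 < s < n + 1 and let ζ > 1. Then ∫_0^1 x^{r-1} (1-x)^{s-r-1}/(ζ^{-1} + x)^n dx = Σ_{k=0}^{∞} binom(-n, k) ζ^{-k} Σ_{l=0}^{s-r-1} (s-r-1)! (-1)^l/(l! (s-r-1-l)! (l+r-k-n)) + ζ^{n+1-s} (-1)^{r-1} (ζ+1)^{s-r-1} Σ_{k=0}^{n-2} Σ_{l=0}^{k} (r-1)! (s-r-1)! (-1)^k (ζ+1)^{-l}/(l! (k-l)! (r+l-k-1)! (s-r-l-1)! (n-1-k)), where in the double sum any term whose factorial has a negative argument is set to zero, and the infinite series converges. -/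
open Filter MeasureTheory Set
open Polynomial

/-!
Put `a = ζ⁻¹`, `p = r - 1`, `q = s - r - 1`, and write `∫₀¹ = ∫₀^∞ - ∫₁^∞`. On `(1, ∞)`, where
`a < 1 < x`, expanding `(a + x)⁻ⁿ` in powers of `a / x` and integrating termwise gives the infinite
series. On `(0, ∞)`, expanding the polynomial `xᵖ (1 - x)^q` in powers of `a + x` gives the finite
double sum. Both improper integrals converge because `p + q ≤ n - 2`.
-/

section TermwiseIntegration

lemma hasSum_inv_add_pow {𝕜 : Type*} [NormedField 𝕜] [CompleteSpace 𝕜] {a x : 𝕜}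
    (h : ‖a‖ < ‖x‖) (n : ℕ) :
    HasSum (fun k : ℕ => (-1) ^ k * ((n + k - 1).choose k : 𝕜) * a ^ k / x ^ (n + k))
      (((a + x) ^ n)⁻¹) := by
  have hx : x ≠ 0 := norm_pos_iff.mp ((norm_nonneg a).trans_lt h)
  cases n with
  | zero =>
    have hvanish (k : ℕ) (hk : k ≠ 0) :
        (-1) ^ k * ((0 + k - 1).choose k : 𝕜) * a ^ k / x ^ (0 + k) = 0 := by
      rw [Nat.choose_eq_zero_of_lt (by omega), Nat.cast_zero, mul_zero, zero_mul, zero_div]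
    simpa using hasSum_single 0 hvanish
  | succ m =>
    have hr : ‖-(a / x)‖ < 1 := by
      rwa [norm_neg, norm_div, div_lt_one (norm_pos_iff.mpr hx)]
    convert! (hasSum_choose_mul_geometric_of_norm_lt_one m hr).mul_left (x ^ (m + 1))⁻¹ using 1
    · ext k
      rw [show m + 1 + k - 1 = k + m by omega, ← Nat.choose_symm_add, neg_pow (a / x), div_pow,
        pow_add x]
      field_simp
    · rw [one_div, ← mul_inv, ← mul_pow, sub_neg_eq_add, mul_add, mul_div_cancel₀ a hx, mul_one,
        add_comm]

lemma hasSum_mul_integral_Ioi_div_pow {b : ℕ → ℝ} {g : ℝ → ℝ} {c : ℝ} (hc : 0 < c)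
    (hb : Summable fun k => b k / c ^ k) (hg : IntegrableOn g (Ioi c)) :
    HasSum (fun k => b k * ∫ x in Ioi c, g x / x ^ k)
      (∫ x in Ioi c, ∑' k, b k * (g x / x ^ k)) := by
  have hbound (k : ℕ) : ∀ᵐ x ∂volume.restrict (Ioi c),
      ‖b k * (g x / x ^ k)‖ ≤ ‖b k / c ^ k‖ * ‖g x‖ := by
    filter_upwards [ae_restrict_mem measurableSet_Ioi] with x (hx : c < x)
    have hcx : c ^ k ≤ ‖x ^ k‖ := (pow_le_pow_left₀ hc.le hx.le k).trans (le_abs_self _)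
    calc ‖b k * (g x / x ^ k)‖ = ‖b k‖ * ‖g x‖ / ‖x ^ k‖ := by
          rw [norm_mul, norm_div, mul_div_assoc]
      _ ≤ ‖b k‖ * ‖g x‖ / c ^ k := by gcongr
      _ = ‖b k / c ^ k‖ * ‖g x‖ := by
          rw [norm_div, Real.norm_of_nonneg (pow_nonneg hc.le k), div_mul_eq_mul_div]
  have hmajorant (k : ℕ) : IntegrableOn (fun x => ‖b k / c ^ k‖ * ‖g x‖) (Ioi c) :=
    hg.norm.const_mul _
  have hint (k : ℕ) : IntegrableOn (fun x => b k * (g x / x ^ k)) (Ioi c) := by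
    refine (hmajorant k).mono' ?_ (hbound k)
    have hinv : AEStronglyMeasurable (fun x : ℝ => (x ^ k)⁻¹) (volume.restrict (Ioi c)) :=
      (by fun_prop : Measurable fun x : ℝ => (x ^ k)⁻¹).aestronglyMeasurable
    exact (hg.aestronglyMeasurable.mul hinv).const_mul _
  have hsum : Summable fun k => ∫ x in Ioi c, ‖b k * (g x / x ^ k)‖ := by
    refine (hb.norm.mul_right (∫ x in Ioi c, ‖g x‖)).of_nonneg_of_le
      (fun k => integral_nonneg fun x => norm_nonneg _) fun k => ?_
    rw [← integral_const_mul]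
    exact integral_mono_ae (hint k).norm (hmajorant k) (hbound k)
  simpa only [integral_const_mul] using hasSum_integral_of_summable_integral_norm hint hsum

lemma hasSum_integral_Ioi_div_add_pow {g : ℝ → ℝ} {a c : ℝ} (hac : |a| < c) {n : ℕ}
    (hg : IntegrableOn (fun x => g x / x ^ n) (Ioi c)) :
    HasSum (fun k : ℕ => (-1) ^ k * ((n + k - 1).choose k : ℝ) * a ^ k *
        ∫ x in Ioi c, g x / x ^ (n + k))
      (∫ x in Ioi c, g x / (a + x) ^ n) := by
  have hc : 0 < c := (abs_nonneg a).trans_lt hac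
  have hnorm {x : ℝ} (hx : c ≤ x) : ‖a‖ < ‖x‖ := hac.trans_le (hx.trans (le_abs_self x))
  have hcoeff : Summable fun k : ℕ => (-1) ^ k * ((n + k - 1).choose k : ℝ) * a ^ k / c ^ k := by
    refine ((hasSum_inv_add_pow (hnorm le_rfl) n).summable.mul_left (c ^ n)).congr fun k => ?_
    rw [pow_add]
    field_simp
  have hseries : ∀ x ∈ Ioi c, ∑' k : ℕ, (-1) ^ k * ((n + k - 1).choose k : ℝ) * a ^ k *
      (g x / x ^ n / x ^ k) = g x / (a + x) ^ n := by
    intro x (hx : c < x)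
    rw [div_eq_mul_inv (g x) ((a + x) ^ n),
      ← ((hasSum_inv_add_pow (hnorm hx.le) n).mul_left (g x)).tsum_eq]
    exact tsum_congr fun k => by rw [div_div, ← pow_add, mul_div_left_comm]
  rw [← setIntegral_congr_fun measurableSet_Ioi hseries]
  simpa only [div_div, ← pow_add] using hasSum_mul_integral_Ioi_div_pow hc hcoeff hg

end TermwiseIntegration

section PolynomialIntegrals

variable {a c : ℝ} {n : ℕ}

lemma integrableOn_Ioi_inv_add_pow (h : 0 < a + c) (hn : 1 < n) :
    IntegrableOn (fun x : ℝ => ((a + x) ^ n)⁻¹) (Ioi c) := by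
  have hn' : -(n : ℝ) < -1 := by simpa
  refine (integrableOn_add_rpow_Ioi_of_lt hn' (neg_lt_iff_pos_add'.mpr h)).congr_fun
    (fun x (hx : c < x) => ?_) measurableSet_Ioi
  simp only [add_comm x, Real.rpow_neg (show 0 ≤ a + x by linarith), Real.rpow_natCast]

lemma integral_Ioi_inv_add_pow (h : 0 < a + c) (hn : 1 < n) :
    ∫ x in Ioi c, ((a + x) ^ n)⁻¹ = (((n - 1 : ℕ) : ℝ) * (a + c) ^ (n - 1))⁻¹ := by
  have hn' : -(n : ℝ) < -1 := by simpa
  calc ∫ x in Ioi c, ((a + x) ^ n)⁻¹ = ∫ u in Ioi (a + c), (u ^ n)⁻¹ := by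
        simpa using (measurePreserving_add_left volume a).setIntegral_preimage_emb
          (measurableEmbedding_addLeft a) (fun u => (u ^ n)⁻¹) (Ioi (a + c))
    _ = ∫ u in Ioi (a + c), u ^ (-(n : ℝ)) :=
        setIntegral_congr_fun measurableSet_Ioi fun u (hu : a + c < u) => by
          simp only [Real.rpow_neg (h.trans hu).le, Real.rpow_natCast]
    _ = (((n - 1 : ℕ) : ℝ) * (a + c) ^ (n - 1))⁻¹ := by
        rw [integral_Ioi_rpow_of_lt hn' h, neg_div, ← div_neg,
          show -(n : ℝ) + 1 = -((n - 1 : ℕ) : ℝ) by rw [Nat.cast_pred (by omega)]; ring,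
          Real.rpow_neg h.le, Real.rpow_natCast, neg_neg, div_eq_inv_mul, mul_inv]

lemma eval_div_add_pow_eq_sum_taylor {K : Type*} [Field K] {P : K[X]} {a x : K} (h : a + x ≠ 0)
    {n N : ℕ} (hP : P.natDegree < N) (hN : N ≤ n) :
    P.eval x / (a + x) ^ n =
      ∑ k ∈ Finset.range N, (taylor (-a) P).coeff k * ((a + x) ^ (n - k))⁻¹ := by
  have hexp : P.eval x = ∑ k ∈ Finset.range N, (taylor (-a) P).coeff k * (a + x) ^ k := by
    rw [← eval_eq_sum_range' (by rwa [natDegree_taylor]), taylor_eval, add_neg_cancel_comm]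
  rw [hexp, Finset.sum_div]
  refine Finset.sum_congr rfl fun k hk => ?_
  rw [pow_sub₀ _ h ((Finset.mem_range.mp hk).le.trans hN), mul_inv, inv_inv]
  ring

lemma integrableOn_Ioi_eval_div_add_pow (h : 0 < a + c) {P : ℝ[X]} (hP : P.natDegree + 1 < n) :
    IntegrableOn (fun x => P.eval x / (a + x) ^ n) (Ioi c) := by
  have hsum : IntegrableOn (fun x => ∑ k ∈ Finset.range (P.natDegree + 1),
      (taylor (-a) P).coeff k * ((a + x) ^ (n - k))⁻¹) (Ioi c) :=
    integrable_finsetSum _ fun k hk => (integrableOn_Ioi_inv_add_pow h (by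
      rw [Finset.mem_range] at hk; omega)).const_mul _
  refine hsum.congr_fun (fun x (hx : c < x) => ?_) measurableSet_Ioi
  exact (eval_div_add_pow_eq_sum_taylor (by linarith) (by omega) hP.le).symm

lemma integral_Ioi_eval_div_add_pow (h : 0 < a + c) {P : ℝ[X]} {N : ℕ} (hP : P.natDegree < N)
    (hN : N < n) :
    ∫ x in Ioi c, P.eval x / (a + x) ^ n = ∑ k ∈ Finset.range N,
      (taylor (-a) P).coeff k / (((n - 1 - k : ℕ) : ℝ) * (a + c) ^ (n - 1 - k)) := by
  have hexp : ∀ x ∈ Ioi c, P.eval x / (a + x) ^ n = ∑ k ∈ Finset.range N,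
      (taylor (-a) P).coeff k * ((a + x) ^ (n - k))⁻¹ := fun x (hx : c < x) =>
    eval_div_add_pow_eq_sum_taylor (by linarith) hP hN.le
  have hexponent {k : ℕ} (hk : k ∈ Finset.range N) : 1 < n - k := by
    rw [Finset.mem_range] at hk; omega
  rw [setIntegral_congr_fun measurableSet_Ioi hexp, integral_finsetSum _ fun k hk =>
    (integrableOn_Ioi_inv_add_pow h (hexponent hk)).const_mul _]
  refine Finset.sum_congr rfl fun k hk => ?_
  rw [integral_const_mul, integral_Ioi_inv_add_pow h (hexponent hk), Nat.sub_right_comm,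
    div_eq_mul_inv]

lemma hasSum_integral_Ioi_eval_div_add_pow (hac : |a| < c) {P : ℝ[X]} {N : ℕ}
    (hP : P.natDegree < N) (hN : N < n) :
    HasSum (fun k : ℕ => (-1) ^ k * ((n + k - 1).choose k : ℝ) * a ^ k * ∑ l ∈ Finset.range N,
        P.coeff l / (((n + k - 1 - l : ℕ) : ℝ) * c ^ (n + k - 1 - l)))
      (∫ x in Ioi c, P.eval x / (a + x) ^ n) := by
  have hc : 0 < 0 + c := by simpa using (abs_nonneg a).trans_lt hac
  have hint := integrableOn_Ioi_eval_div_add_pow hc (P := P) (n := n) (by omega)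
  simp only [zero_add] at hint
  have hterm (k : ℕ) : ∫ x in Ioi c, P.eval x / x ^ (n + k) = ∑ l ∈ Finset.range N,
      P.coeff l / (((n + k - 1 - l : ℕ) : ℝ) * c ^ (n + k - 1 - l)) := by
    simpa using integral_Ioi_eval_div_add_pow hc hP (n := n + k) (by omega)
  simpa only [hterm] using hasSum_integral_Ioi_div_add_pow hac hint

end PolynomialIntegrals

section EulerWeight

variable {R : Type*} [CommRing R]

lemma coeff_C_sub_X_pow (b : R) (q l : ℕ) :
    ((C b - X) ^ q).coeff l = (-1) ^ l * b ^ (q - l) * (q.choose l : R) := by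
  have hcomp : (C b - X) ^ q = ((X + C b) ^ q).comp (C (-1) * X) := by
    rw [pow_comp, add_comp, X_comp, C_comp, C_neg, C_1, neg_one_mul, sub_eq_neg_add]
  rw [hcomp, comp_C_mul_X_coeff, coeff_X_add_C_pow]
  ring

lemma natDegree_X_pow_mul_one_sub_X_pow_le (p q : ℕ) :
    (X ^ p * (1 - X) ^ q : R[X]).natDegree ≤ p + q := by
  compute_degree

lemma sum_coeff_X_pow_mul_one_sub_X_pow_mul (p q : ℕ) (f : ℕ → R) :
    ∑ j ∈ Finset.range (p + q + 1), (X ^ p * (1 - X) ^ q : R[X]).coeff j * f j =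
      ∑ l ∈ Finset.range (q + 1), (-1) ^ l * (q.choose l : R) * f (p + l) := by
  have hlow : ∀ j ∈ Finset.range p, (X ^ p * (1 - X) ^ q : R[X]).coeff j * f j = 0 := by
    intro j hj
    rw [coeff_X_pow_mul', if_neg (by simpa using hj), zero_mul]
  rw [add_assoc, Finset.sum_range_add, Finset.sum_eq_zero hlow, zero_add]
  refine Finset.sum_congr rfl fun l _ => ?_
  rw [add_comm p l, coeff_X_pow_mul, ← C_1, coeff_C_sub_X_pow, one_pow, mul_one]

lemma coeff_taylor_X_pow_mul_one_sub_X_pow (a : R) (p q k : ℕ) :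
    (taylor (-a) (X ^ p * (1 - X) ^ q)).coeff k = ∑ l ∈ Finset.range (k + 1),
      (-1) ^ l * (1 + a) ^ (q - l) * (q.choose l : R) *
        ((-a) ^ (p - (k - l)) * (p.choose (k - l) : R)) := by
  have hfactor : taylor (-a) (X ^ p * (1 - X) ^ q) = (C (1 + a) - X) ^ q * (X + C (-a)) ^ p := by
    rw [taylor_mul, taylor_pow, taylor_pow, map_sub, taylor_X, taylor_one]
    simp only [map_add, map_neg, map_one]
    ring
  rw [hfactor, coeff_mul, Finset.Nat.sum_antidiagonal_eq_sum_range_succ_mk]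
  simp only [coeff_C_sub_X_pow, coeff_X_add_C_pow]

end EulerWeight

-- For `i > m` both sides vanish: `Real.Gamma` is `0` at its poles and `x / 0 = 0`.
lemma cast_choose_eq_factorial_div_mul_Gamma (m i : ℕ) :
    (m.choose i : ℝ) = (m.factorial : ℝ) / ((i.factorial : ℝ) * Real.Gamma ((m : ℝ) + 1 - i)) := by
  rcases le_or_gt i m with h | h
  · rw [Nat.cast_choose ℝ h, ← Real.Gamma_nat_eq_factorial (m - i), Nat.cast_sub h,
      sub_add_eq_add_sub]
  · have hpole : (m : ℝ) + 1 - i = -((i - (m + 1) : ℕ) : ℝ) := by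
      rw [Nat.cast_sub h]; push_cast; ring
    rw [Nat.choose_eq_zero_of_lt h, hpole, Real.Gamma_neg_nat_eq_zero, mul_zero, div_zero,
      Nat.cast_zero]

lemma choose_mul_choose_sub_eq_factorial_div_mul_Gamma (p q : ℕ) {k l : ℕ} (h : l ≤ k) :
    (q.choose l : ℝ) * (p.choose (k - l) : ℝ) = (p.factorial : ℝ) * (q.factorial : ℝ) /
      ((l.factorial : ℝ) * ((k - l).factorial : ℝ) * Real.Gamma ((p : ℝ) + 1 + l - k) *
        Real.Gamma ((q : ℝ) + 1 - l)) := by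
  have harg : (p : ℝ) + 1 + l - k = p + 1 - (k - l : ℕ) := by
    rw [Nat.cast_sub h]
    ring
  rw [harg, cast_choose_eq_factorial_div_mul_Gamma, cast_choose_eq_factorial_div_mul_Gamma]
  ring

section EulerIntegral

variable {p q n : ℕ}

lemma integrableOn_Ioi_zero_pow_mul_one_sub_pow {a : ℝ} (ha : 0 < a) (h : p + q + 1 < n) :
    IntegrableOn (fun x : ℝ => x ^ p * (1 - x) ^ q / (a + x) ^ n) (Ioi 0) := by
  simpa using integrableOn_Ioi_eval_div_add_pow (c := 0) (by simpa)
    ((Nat.add_le_add_right (natDegree_X_pow_mul_one_sub_X_pow_le (R := ℝ) p q) 1).trans_lt h)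

lemma hasSum_neg_integral_Ioi_one_pow_mul_one_sub_pow {a : ℝ} (ha : |a| < 1) (h : p + q + 1 < n) :
    HasSum (fun k : ℕ => (-1 : ℝ) ^ k * ((n + k - 1).choose k : ℝ) * a ^ k *
        ∑ l ∈ Finset.range (q + 1), (q.factorial : ℝ) * (-1) ^ l /
          ((l.factorial : ℝ) * ((q - l).factorial : ℝ) * ((l : ℝ) + (p + 1) - k - n)))
      (-∫ x in Ioi (1 : ℝ), x ^ p * (1 - x) ^ q / (a + x) ^ n) := by
  have hseries := (hasSum_integral_Ioi_eval_div_add_pow ha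
    (Nat.lt_add_one_of_le (natDegree_X_pow_mul_one_sub_X_pow_le (R := ℝ) p q)) h).neg
  simp only [eval_mul, eval_pow, eval_sub, eval_X, eval_one, one_pow, mul_one, ← mul_neg,
    div_eq_mul_inv (coeff _ _), sum_coeff_X_pow_mul_one_sub_X_pow_mul] at hseries
  convert! hseries using 3 with k
  rw [← Finset.sum_neg_distrib]
  refine Finset.sum_congr rfl fun l hl => ?_
  have hlq : l ≤ q := Nat.lt_succ_iff.mp (Finset.mem_range.mp hl)
  have hdenom : (l : ℝ) + (p + 1) - k - n = -((n + k - 1 - (p + l) : ℕ) : ℝ) := by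
    rw [Nat.cast_sub (by omega), Nat.cast_pred (by omega)]
    push_cast
    ring
  rw [hdenom, Nat.cast_choose ℝ hlq, ← div_div, div_neg, div_eq_mul_inv _ (Nat.cast _)]
  ring

lemma choose_mul_choose_div_inv_pow_eq {ζ : ℝ} (hζ : 0 < ζ) (h : p + q + 1 < n)
    (l i : ℕ) (d : ℝ) :
    (-1) ^ l * (1 + ζ⁻¹) ^ (q - l) * (q.choose l : ℝ) *
        ((-ζ⁻¹) ^ (p - i) * (p.choose i : ℝ)) / (d * ζ⁻¹ ^ (n - 1 - (l + i))) =
      ζ ^ (n - 1 - (p + q)) * (-1) ^ p * (ζ + 1) ^ q *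
        ((q.choose l : ℝ) * (p.choose i : ℝ) * (-1) ^ (l + i) / ((ζ + 1) ^ l * d)) := by
  rcases lt_or_ge q l with hl | hl
  · simp [Nat.choose_eq_zero_of_lt hl]
  rcases lt_or_ge p i with hi | hi
  · simp [Nat.choose_eq_zero_of_lt hi]
  obtain ⟨u, rfl⟩ := Nat.exists_eq_add_of_le hl
  obtain ⟨v, rfl⟩ := Nat.exists_eq_add_of_le hi
  obtain ⟨m, rfl⟩ := Nat.exists_eq_add_of_lt h
  have hsign : (-1 : ℝ) ^ v = (-1) ^ (i + v) * (-1) ^ i := by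
    rw [pow_add, mul_right_comm, ← mul_pow, neg_one_mul, neg_neg, one_pow, one_mul]
  rw [show i + v + (l + u) + 1 + m + 1 - 1 - (l + i) = u + v + (m + 1) by omega,
    show i + v + (l + u) + 1 + m + 1 - 1 - (i + v + (l + u)) = m + 1 by omega,
    Nat.add_sub_cancel_left, Nat.add_sub_cancel_left, neg_pow ζ⁻¹, hsign,
    show 1 + ζ⁻¹ = (ζ + 1) * ζ⁻¹ by field_simp]
  simp only [mul_pow, inv_pow]
  field_simp
  ring

lemma integral_Ioi_zero_pow_mul_one_sub_pow {ζ : ℝ} (hζ : 0 < ζ) (h : p + q + 1 < n) :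
    ∫ x in Ioi (0 : ℝ), x ^ p * (1 - x) ^ q / (ζ⁻¹ + x) ^ n =
      ζ ^ (n - 1 - (p + q)) * (-1) ^ p * (ζ + 1) ^ q *
        ∑ k ∈ Finset.range (n - 1), ∑ l ∈ Finset.range (k + 1),
          (q.choose l : ℝ) * (p.choose (k - l) : ℝ) * (-1) ^ k /
            ((ζ + 1) ^ l * ((n - 1 - k : ℕ) : ℝ)) := by
  have htaylor := integral_Ioi_eval_div_add_pow (a := ζ⁻¹) (c := 0) (by simpa using inv_pos.mpr hζ)
    ((natDegree_X_pow_mul_one_sub_X_pow_le (R := ℝ) p q).trans_lt (Nat.lt_sub_of_add_lt h))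
    (Nat.sub_one_lt_of_lt h)
  simp only [eval_mul, eval_pow, eval_sub, eval_X, eval_one, add_zero,
    coeff_taylor_X_pow_mul_one_sub_X_pow] at htaylor
  rw [htaylor, Finset.mul_sum]
  refine Finset.sum_congr rfl fun k _ => ?_
  rw [Finset.sum_div, Finset.mul_sum]
  refine Finset.sum_congr rfl fun l hl => ?_
  have hlk : l + (k - l) = k := Nat.add_sub_of_le (Nat.lt_succ_iff.mp (Finset.mem_range.mp hl))
  have hterm := choose_mul_choose_div_inv_pow_eq hζ h l (k - l) ((n - 1 - k : ℕ) : ℝ)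
  rwa [hlk] at hterm

end EulerIntegral

/-- Series representation of the Euler integral of the Gauss hypergeometric function
`₂F₁(n, r; s; -ζ)` for positive integers `r + 1 < s < n + 1` and `ζ > 1`.
Factorials of possibly-negative integer arguments `(r+l-k-1)!` and `(s-r-l-1)!` are
written as `Γ(r+l-k)` and `Γ(s-r-l)`; Mathlib's `Real.Gamma` vanishes at nonpositive
integers, so the corresponding terms are zero, as required. -/
theorem stmt_16 (r s n : ℕ) (hr : 1 ≤ r) (hrs : r + 1 < s) (hsn : s < n + 1)
    (ζ : ℝ) (hζ : 1 < ζ) :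
    ∃ A : ℝ,
      HasSum (fun k : ℕ =>
        (-1 : ℝ) ^ k * (Nat.choose (n + k - 1) k : ℝ) * ζ⁻¹ ^ k *
          ∑ l ∈ Finset.range (s - r),
            (Nat.factorial (s - r - 1) : ℝ) * (-1 : ℝ) ^ l /
              ((Nat.factorial l : ℝ) * (Nat.factorial (s - r - 1 - l) : ℝ) *
                ((l : ℝ) + r - k - n))) A ∧
      (∫ x in (0 : ℝ)..1, x ^ (r - 1) * (1 - x) ^ (s - r - 1) / (ζ⁻¹ + x) ^ n) =
        A + ζ ^ (n + 1 - s) * (-1 : ℝ) ^ (r - 1) * (ζ + 1) ^ (s - r - 1) *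
          ∑ k ∈ Finset.range (n - 1), ∑ l ∈ Finset.range (k + 1),
            (Nat.factorial (r - 1) : ℝ) * (Nat.factorial (s - r - 1) : ℝ) *
              (-1 : ℝ) ^ k /
              ((ζ + 1) ^ l * (Nat.factorial l : ℝ) * (Nat.factorial (k - l) : ℝ) *
                Real.Gamma ((r : ℝ) + l - k) * Real.Gamma ((s : ℝ) - r - l) *
                ((n - 1 - k : ℕ) : ℝ)) := by
  obtain ⟨p, rfl⟩ := Nat.exists_eq_add_of_le' hr
  obtain ⟨q, rfl⟩ : ∃ q, s = p + 1 + (q + 1) := ⟨s - (p + 1) - 1, by omega⟩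
  have hpq : p + q + 1 < n := by omega
  have hζ₀ : 0 < ζ := one_pos.trans hζ
  have hinv : |ζ⁻¹| < 1 := by
    rw [abs_of_pos (inv_pos.mpr hζ₀)]
    exact inv_lt_one_of_one_lt₀ hζ
  have hint : IntegrableOn (fun x => x ^ p * (1 - x) ^ q / (ζ⁻¹ + x) ^ n) (Ioi 0) :=
    integrableOn_Ioi_zero_pow_mul_one_sub_pow (inv_pos.mpr hζ₀) hpq
  simp only [Nat.add_sub_cancel_left, Nat.add_sub_cancel,
    show n + 1 - (p + 1 + (q + 1)) = n - 1 - (p + q) by omega]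
  refine ⟨-∫ x in Ioi (1 : ℝ), x ^ p * (1 - x) ^ q / (ζ⁻¹ + x) ^ n, ?_, ?_⟩
  · simpa only [Nat.cast_add_one] using hasSum_neg_integral_Ioi_one_pow_mul_one_sub_pow hinv hpq
  · rw [← intervalIntegral.integral_Ioi_sub_Ioi hint zero_le_one,
      integral_Ioi_zero_pow_mul_one_sub_pow hζ₀ hpq, sub_eq_neg_add]
    simp only [Nat.cast_add, Nat.cast_one, add_sub_cancel_left]
    congr 1
    refine congrArg _ (Finset.sum_congr rfl fun k _ => Finset.sum_congr rfl fun l hl => ?_)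
    rw [choose_mul_choose_sub_eq_factorial_div_mul_Gamma p q
      (Nat.lt_succ_iff.mp (Finset.mem_range.mp hl))]
    ring
end
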